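/- arXiv:2310.17520 — 3 statements merged into one kernel-verified Lean document; each statement's English description precedes it below -/
import Mathlib

section
/- Let G=(V,E) be a finite, connected, non-bipartite, vertex-transitive graph of degree d, with normalized adjacency eigenvalues μ_n ≤ … ≤ μ_1 = 1 and edge-expansion h. Then 1 + μ_n ≥ min{ 2/d, ((√3 − 1)^2 / 8) · h^2 }. -/
open Finset Polynomial

noncomputable section
open scoped Classical

/-- The normalized adjacency matrix `D⁻¹A` of a finite graph. -/
def normAdj {V : Type*} [Fintype V] (G : SimpleGraph V) : Matrix V V ℝ :=
  Matrix.of fun u v => if G.Adj u v then ((G.degree u : ℝ))⁻¹ else 0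

/-- The volume of a vertex subset: the sum of the degrees of its vertices. -/
def vol {V : Type*} [Fintype V] (G : SimpleGraph V) (S : Finset V) : ℝ :=
  ∑ u ∈ S, (G.degree u : ℝ)

/-- The number of boundary edges of a vertex subset, i.e. edges with exactly one
endpoint in `S`. -/
def bdry {V : Type*} [Fintype V] (G : SimpleGraph V) (S : Finset V) : ℝ :=
  ∑ u ∈ S, ∑ v ∈ Sᶜ, if G.Adj u v then (1 : ℝ) else 0

/-- The edge-expansion (Cheeger constant)
`h = min_{∅ ≠ S ⊊ V} |∂S| / min(vol S, vol Sᶜ)`. -/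
def cheeger {V : Type*} [Fintype V] (G : SimpleGraph V) : ℝ :=
  sInf { x : ℝ | ∃ S : Finset V, S.Nonempty ∧ S ≠ Finset.univ ∧
    x = bdry G S / min (vol G S) (vol G Sᶜ) }

/-- A graph is vertex-transitive if its automorphism group acts transitively on vertices. -/
def VertexTransitive {V : Type*} (G : SimpleGraph V) : Prop :=
  ∀ u v : V, ∃ φ : G ≃g G, φ u = v

/-!
Let `P` be the orthogonal projection onto the `μ`-eigenspace of `D⁻¹A`, of dimension `k`.
Automorphisms preserve `P`, so its diagonal is constant, `P u u = p`, and the rows `x u` of `P` are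
vectors of equal length with `⟪x u, x v⟫ = P u v`. If `1 + μ` is small then `x u ≈ -x v` along
edges, hence the tensor squares `x u ⊗ x u` hardly vary along edges. The vector-valued Cheeger
inequality bounds this variation below by `h²` times the global variance of the tensor squares,
which is proportional to `k² - k`, and this gives `1 + μ ≥ h² / 8` as soon as `k ≥ 2`. If `k = 1`,
the global variance vanishes: the eigenvector has constant modulus, and its signs are a proper
`2`-coloring unless `1 + μ ≥ 2 / d`.
-/

section FiniteFunctions

lemma exists_weighted_median {V α R : Type*} [Fintype V] [Nonempty V] [LinearOrder α]
    [CommRing R] [LinearOrder R] [IsStrictOrderedRing R] {w : V → R}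
    (hw : 0 ≤ w) (f : V → α) :
    ∃ m, 2 * ∑ v with m < f v, w v ≤ ∑ v, w v ∧ 2 * ∑ v with f v < m, w v ≤ ∑ v, w v := by
  let T : Finset V := {x | 2 * ∑ v with f x < f v, w v ≤ ∑ v, w v}
  have hT : T.Nonempty := by
    obtain ⟨x, hx⟩ := Finite.exists_max f
    have hsum : 0 ≤ ∑ v, w v := sum_nonneg fun v _ => hw v
    exact ⟨x, by simpa [T, (hx _).not_gt] using hsum⟩
  obtain ⟨x, hx, hmin⟩ := T.exists_min_image f hT
  refine ⟨f x, by simpa [T] using hx, ?_⟩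
  by_contra! hlt
  have hne : ({v | f v < f x} : Finset V).Nonempty := by
    by_contra! hempty
    rw [hempty, sum_empty, mul_zero] at hlt
    exact hlt.not_ge (sum_nonneg fun v _ => hw v)
  obtain ⟨y, hy, hmax⟩ := exists_max_image _ f hne
  have hyx : f y < f x := by simpa using hy
  have hyT : y ∉ T := fun h => (hmin y h).not_gt hyx
  have hupper : ∑ v with f y < f v, w v ≤ ∑ v with ¬ f v < f x, w v := by
    refine sum_le_sum_of_subset_of_nonneg (fun v hv => ?_) fun v _ _ => hw v
    simp only [mem_filter_univ] at hv ⊢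
    exact fun h => (hmax v (by simpa using h)).not_gt hv
  have hsplit := sum_filter_add_sum_filter_not univ (fun v => f v < f x) w
  simp only [T, mem_filter_univ, not_le] at hyT
  linarith

variable {V R : Type*} [AddCommGroup R] [LinearOrder R] [IsOrderedAddMonoid R]

lemma nonneg_layer_induction [Finite V] {p : (V → R) → Prop} (zero : p 0)
    (add_indicator : ∀ (g : V → R) (S : Finset V) (c : R), 0 ≤ g → 0 < c →
      (∀ v ∉ S, g v = 0) → p g → p (g + (S : Set V).indicator fun _ => c))
    {f : V → R} (hf : 0 ≤ f) : p f := by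
  have := Fintype.ofFinite V
  induction hk : #{v | f v ≠ 0} using Nat.strong_induction_on generalizing f with
  | _ k ih =>
    subst hk
    set S : Finset V := {v | f v ≠ 0} with hS
    rcases S.eq_empty_or_nonempty with hempty | hne
    · convert zero
      ext v
      simpa [hS] using filter_eq_empty_iff.1 hempty (mem_univ v)
    -- Peel off the layer of height `min f` on the support: it removes the minimizer `w` from it.
    obtain ⟨w, hw, hmin⟩ := S.exists_min_image f hne
    have hout : ∀ v ∉ S, f v = 0 := fun v hv => by simpa [hS] using hv
    let g : V → R := f - (S : Set V).indicator fun _ => f w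
    have hgout : ∀ v ∉ S, g v = 0 := fun v hv => by simp [g, hv, hout v hv]
    have hg : 0 ≤ g := fun v => by
      by_cases hv : v ∈ S
      · simpa [g, hv] using hmin v hv
      · exact (hgout v hv).ge
    have hsub : ({v | g v ≠ 0} : Finset V) ⊂ S := by
      refine (ssubset_iff_of_subset fun v hv => ?_).2 ⟨w, hw, by simp [g, hw]⟩
      by_contra hvS
      simp [hgout v hvS] at hv
    have hfw : 0 < f w := (hf w).lt_of_ne' (by simpa [hS] using hw)
    simpa [g] using add_indicator g S (f w) hg hfw hgout (ih _ (card_lt_card hsub) hg rfl)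

lemma abs_add_indicator_sub_add_indicator {g : V → R} {S : Finset V} {c : R}
    (hg : 0 ≤ g) (hc : 0 ≤ c) (hgS : ∀ v ∉ S, g v = 0) (u v : V) :
    |(g + (S : Set V).indicator fun _ => c) u - (g + (S : Set V).indicator fun _ => c) v| =
      |g u - g v| +
        |(S : Set V).indicator (fun _ => c) u - (S : Set V).indicator (fun _ => c) v| := by
  have hgu : 0 ≤ g u := hg u
  have hgv : 0 ≤ g v := hg v
  by_cases hu : u ∈ S <;> by_cases hv : v ∈ S
  · simp [hu, hv]
  · simp [hu, hv, hgS v hv, abs_of_nonneg, hgu, hc, add_nonneg]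
  · rw [abs_sub_comm, abs_sub_comm (g u), abs_sub_comm (Set.indicator _ _ u)]
    simp [hu, hv, hgS u hu, abs_of_nonneg, hgv, hc, add_nonneg]
  · simp [hu, hv]

end FiniteFunctions

section Squares

variable {R : Type*} [CommRing R] [LinearOrder R] [IsStrictOrderedRing R]

lemma sq_eq_posPart_sq_add_negPart_sq (a : R) : a ^ 2 = a⁺ ^ 2 + a⁻ ^ 2 := by
  rcases le_total a 0 with ha | ha <;>
    simp [ha, posPart_of_nonneg, posPart_of_nonpos, negPart_of_nonneg, negPart_of_nonpos]

lemma sq_posPart_sub_add_sq_negPart_sub_le (a b : R) :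
    (a⁺ - b⁺) ^ 2 + (a⁻ - b⁻) ^ 2 ≤ (a - b) ^ 2 := by
  rcases le_total a 0 with ha | ha <;> rcases le_total b 0 with hb | hb <;>
    simp only [posPart_of_nonneg, posPart_of_nonpos, negPart_of_nonneg, negPart_of_nonpos,
      ha, hb] <;>
    nlinarith

lemma mul_abs_sq_sub_sq_le (h a b : ℝ) :
    h * |a ^ 2 - b ^ 2| ≤ (a - b) ^ 2 + h ^ 2 / 2 * (a ^ 2 + b ^ 2) := by
  rw [sq_sub_sq, abs_mul]
  nlinarith [sq_nonneg (|a - b| - h / 2 * |a + b|), sq_abs (a - b), sq_abs (a + b),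
    mul_nonneg (sq_nonneg h) (sq_nonneg (a - b))]

lemma sum_sum_mul_mul_sub_sq_le {V : Type*} [Fintype V] (w f : V → R) (m : R) :
    ∑ u, ∑ v, w u * w v * (f u - f v) ^ 2 ≤ 2 * (∑ v, w v) * ∑ v, w v * (f v - m) ^ 2 := by
  have hexpand : ∑ u, ∑ v, w u * w v * (f u - f v) ^ 2 =
      2 * (∑ v, w v) * (∑ v, w v * (f v - m) ^ 2) - 2 * (∑ v, w v * (f v - m)) ^ 2 := by
    have hterm : ∀ u v, w u * w v * (f u - f v) ^ 2 =
        w u * (f u - m) ^ 2 * w v + w u * (w v * (f v - m) ^ 2) -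
          2 * (w u * (f u - m) * (w v * (f v - m))) := fun u v => by ring
    simp only [hterm, sum_sub_distrib, sum_add_distrib, ← mul_sum, ← sum_mul]
    ring
  linarith [sq_nonneg (∑ v, w v * (f v - m))]

lemma norm_tmul_self_sub_tmul_self_sq {E : Type*} [NormedAddCommGroup E] [InnerProductSpace ℝ E]
    {p : ℝ} {x y : E} (hx : ‖x‖ ^ 2 = p) (hy : ‖y‖ ^ 2 = p) :
    ‖x ⊗ₜ[ℝ] x - y ⊗ₜ[ℝ] y‖ ^ 2 = 2 * (p ^ 2 - inner ℝ x y ^ 2) := by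
  rw [norm_sub_sq_real, TensorProduct.inner_tmul, TensorProduct.norm_tmul,
    TensorProduct.norm_tmul, ← pow_two ‖x‖, ← pow_two ‖y‖, hx, hy]
  ring

end Squares

section Graph

variable {V : Type*} [Fintype V] (G : SimpleGraph V)

lemma sum_sum_neighborFinset_comm {M : Type*} [AddCommMonoid M] (F : V → V → M) :
    ∑ u, ∑ v ∈ G.neighborFinset u, F u v = ∑ u, ∑ v ∈ G.neighborFinset u, F v u :=
  sum_comm' (by simp [G.adj_comm])

lemma sum_sum_neighborFinset_fst_add_snd (f : V → ℝ) :
    ∑ u, ∑ v ∈ G.neighborFinset u, (f u + f v) = 2 * ∑ u, G.degree u * f u := by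
  simp only [sum_add_distrib]
  rw [← sum_sum_neighborFinset_comm G fun u _ => f u, ← two_mul]
  simp

lemma vol_nonneg (S : Finset V) : 0 ≤ vol G S :=
  sum_nonneg fun _ _ => Nat.cast_nonneg _

lemma vol_mono {S T : Finset V} (hST : S ⊆ T) : vol G S ≤ vol G T :=
  sum_le_sum_of_subset_of_nonneg hST fun _ _ _ => Nat.cast_nonneg _

lemma vol_add_vol_compl (S : Finset V) : vol G S + vol G Sᶜ = vol G univ :=
  sum_add_sum_compl S _

lemma bdry_nonneg (S : Finset V) : 0 ≤ bdry G S :=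
  sum_nonneg fun _ _ => sum_nonneg fun _ _ => by positivity

lemma sum_sum_neighborFinset_abs_indicator_sub (S : Finset V) {c : ℝ} (hc : 0 ≤ c) :
    ∑ u, ∑ v ∈ G.neighborFinset u,
      |(S : Set V).indicator (fun _ => c) u - (S : Set V).indicator (fun _ => c) v| =
      2 * (c * bdry G S) := by
  let χ : V → V → ℝ := fun u v => if u ∈ S ∧ v ∉ S then c else 0
  have hbdry : ∑ u, ∑ v ∈ G.neighborFinset u, χ u v = c * bdry G S := by
    simp only [χ, bdry, mul_sum, G.neighborFinset_eq_filter, sum_filter, ite_and]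
    rw [← sum_subset (subset_univ S) fun u _ hu => by simp [hu]]
    refine sum_congr rfl fun u hu => ?_
    rw [← sum_subset (subset_univ Sᶜ) fun v _ hv => by simp_all]
    exact sum_congr rfl fun v hv => by simp_all
  calc _ = ∑ u, ∑ v ∈ G.neighborFinset u, (χ u v + χ v u) := by
        refine sum_congr rfl fun u _ => sum_congr rfl fun v _ => ?_
        by_cases hu : u ∈ S <;> by_cases hv : v ∈ S <;> simp [χ, hu, hv, abs_of_nonneg hc]
    _ = 2 * (c * bdry G S) := by
        simp only [sum_add_distrib]
        rw [← sum_sum_neighborFinset_comm G χ, hbdry, two_mul]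

end Graph

section Cheeger

variable {V : Type*} [Fintype V] (G : SimpleGraph V)

lemma bdry_div_min_vol_nonneg (S : Finset V) : 0 ≤ bdry G S / min (vol G S) (vol G Sᶜ) :=
  div_nonneg (bdry_nonneg G S) (le_min (vol_nonneg G S) (vol_nonneg G Sᶜ))

lemma cheeger_nonneg : 0 ≤ cheeger G := by
  refine Real.sInf_nonneg ?_
  rintro _ ⟨S, -, -, rfl⟩
  exact bdry_div_min_vol_nonneg G S

lemma cheeger_mul_min_vol_le_bdry (S : Finset V) :
    cheeger G * min (vol G S) (vol G Sᶜ) ≤ bdry G S := by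
  rcases (le_min (vol_nonneg G S) (vol_nonneg G Sᶜ)).eq_or_lt with hmin | hmin
  · rw [← hmin, mul_zero]
    exact bdry_nonneg G S
  rw [← le_div_iff₀ hmin]
  refine csInf_le ⟨0, ?_⟩ ⟨S, ?_, ?_, rfl⟩
  · rintro _ ⟨T, -, -, rfl⟩
    exact bdry_div_min_vol_nonneg G T
  · rw [nonempty_iff_ne_empty]
    rintro rfl
    simp [vol] at hmin
  · rintro rfl
    simp [vol] at hmin

lemma cheeger_mul_sum_degree_mul_le {f : V → ℝ} (hf : 0 ≤ f) {T : Finset V}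
    (hT : 2 * vol G T ≤ vol G univ) (hfT : ∀ v ∉ T, f v = 0) :
    2 * (cheeger G * ∑ v, G.degree v * f v) ≤
      ∑ u, ∑ v ∈ G.neighborFinset u, |f u - f v| := by
  revert hfT
  refine nonneg_layer_induction
    (p := fun f : V → ℝ => (∀ v ∉ T, f v = 0) → 2 * (cheeger G * ∑ v, G.degree v * f v) ≤
      ∑ u, ∑ v ∈ G.neighborFinset u, |f u - f v|) (by simp) (fun g S c hg hc hgS ih hgT => ?_) hf
  have hST : S ⊆ T := fun v hv => by
    by_contra hvT
    have hzero := hgT v hvT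
    have hgv : 0 ≤ g v := hg v
    simp only [Pi.add_apply, Set.indicator_of_mem (mem_coe.2 hv)] at hzero
    linarith
  have hlayer : cheeger G * vol G S ≤ bdry G S := by
    have hmono := vol_mono G hST
    have hcompl := vol_add_vol_compl G S
    have h := cheeger_mul_min_vol_le_bdry G S
    rwa [min_eq_left (by linarith)] at h
  have hrec := ih fun v hv => hgS v fun hvS => hv (hST hvS)
  have hsum : ∑ v, G.degree v * (g + (S : Set V).indicator fun _ => c) v =
      ∑ v, G.degree v * g v + c * vol G S := by
    simp [vol, mul_add, sum_add_distrib, sum_mul, Set.indicator_apply, mul_comm c]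
  simp only [abs_add_indicator_sub_add_indicator hg hc.le hgS, sum_add_distrib]
  rw [sum_sum_neighborFinset_abs_indicator_sub G S hc.le, hsum]
  linarith [mul_le_mul_of_nonneg_left hlayer hc.le]

lemma cheeger_sq_mul_sum_degree_mul_sq_le {f : V → ℝ} {T : Finset V}
    (hT : 2 * vol G T ≤ vol G univ) (hfT : ∀ v ∉ T, f v = 0) :
    cheeger G ^ 2 * ∑ v, G.degree v * f v ^ 2 ≤
      ∑ u, ∑ v ∈ G.neighborFinset u, (f u - f v) ^ 2 := by
  have hL1 := cheeger_mul_sum_degree_mul_le G (f := f ^ 2) (fun v => sq_nonneg (f v)) hT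
    fun v hv => by simp [hfT v hv]
  have hedges : cheeger G * ∑ u, ∑ v ∈ G.neighborFinset u, |f u ^ 2 - f v ^ 2| ≤
      ∑ u, ∑ v ∈ G.neighborFinset u, (f u - f v) ^ 2 +
        cheeger G ^ 2 * ∑ v, G.degree v * f v ^ 2 := by
    calc _ ≤ ∑ u, ∑ v ∈ G.neighborFinset u,
          ((f u - f v) ^ 2 + cheeger G ^ 2 / 2 * (f u ^ 2 + f v ^ 2)) := by
          simp only [mul_sum]
          gcongr
          exact mul_abs_sq_sub_sq_le _ _ _
      _ = _ := by
          simp only [sum_add_distrib (g := fun _ => cheeger G ^ 2 / 2 * _), ← mul_sum]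
          rw [sum_sum_neighborFinset_fst_add_snd G fun v => f v ^ 2]
          ring
  have hmul := mul_le_mul_of_nonneg_left hL1 (cheeger_nonneg G)
  simp only [Pi.pow_apply] at hmul
  linarith

lemma exists_cheeger_sq_mul_sum_degree_mul_sub_sq_le [Nonempty V] (f : V → ℝ) :
    ∃ m, cheeger G ^ 2 * ∑ v, G.degree v * (f v - m) ^ 2 ≤
      ∑ u, ∑ v ∈ G.neighborFinset u, (f u - f v) ^ 2 := by
  obtain ⟨m, hpos, hneg⟩ :=
    exists_weighted_median (w := fun v => (G.degree v : ℝ)) (fun _ => Nat.cast_nonneg _) f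
  have hposPart := cheeger_sq_mul_sum_degree_mul_sq_le G
    (f := fun v => (f v - m)⁺) hpos fun v hv => by simpa using hv
  have hnegPart := cheeger_sq_mul_sum_degree_mul_sq_le G
    (f := fun v => (f v - m)⁻) hneg fun v hv => by simpa using hv
  refine ⟨m, ?_⟩
  calc cheeger G ^ 2 * ∑ v, G.degree v * (f v - m) ^ 2
      = cheeger G ^ 2 * ∑ v, G.degree v * (f v - m)⁺ ^ 2 +
          cheeger G ^ 2 * ∑ v, G.degree v * (f v - m)⁻ ^ 2 := by
        rw [← mul_add, ← sum_add_distrib]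
        simp only [← mul_add, ← sq_eq_posPart_sq_add_negPart_sq]
    _ ≤ _ := add_le_add hposPart hnegPart
    _ = ∑ u, ∑ v ∈ G.neighborFinset u,
          (((f u - m)⁺ - (f v - m)⁺) ^ 2 + ((f u - m)⁻ - (f v - m)⁻) ^ 2) := by
        simp only [sum_add_distrib]
    _ ≤ ∑ u, ∑ v ∈ G.neighborFinset u, (f u - f v) ^ 2 := by
        gcongr with u _ v _
        simpa using sq_posPart_sub_add_sq_negPart_sub_le (f u - m) (f v - m)

lemma cheeger_sq_mul_sum_sum_sub_sq_le (f : V → ℝ) :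
    cheeger G ^ 2 * ∑ u, ∑ v, G.degree u * G.degree v * (f u - f v) ^ 2 ≤
      2 * vol G univ * ∑ u, ∑ v ∈ G.neighborFinset u, (f u - f v) ^ 2 := by
  rcases isEmpty_or_nonempty V with _ | _
  · simp
  obtain ⟨m, hm⟩ := exists_cheeger_sq_mul_sum_degree_mul_sub_sq_le G f
  calc _ ≤ cheeger G ^ 2 * (2 * vol G univ * ∑ v, G.degree v * (f v - m) ^ 2) := by
        gcongr
        exact sum_sum_mul_mul_sub_sq_le _ f m
    _ = 2 * vol G univ * (cheeger G ^ 2 * ∑ v, G.degree v * (f v - m) ^ 2) := by ring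
    _ ≤ _ := by
        gcongr
        exact mul_nonneg zero_le_two (vol_nonneg G univ)

variable {E : Type*} [NormedAddCommGroup E] [InnerProductSpace ℝ E] [FiniteDimensional ℝ E]

lemma cheeger_sq_mul_sum_sum_norm_sub_sq_le (x : V → E) :
    cheeger G ^ 2 * ∑ u, ∑ v, G.degree u * G.degree v * ‖x u - x v‖ ^ 2 ≤
      2 * vol G univ * ∑ u, ∑ v ∈ G.neighborFinset u, ‖x u - x v‖ ^ 2 := by
  let b := stdOrthonormalBasis ℝ E
  have hnorm : ∀ u v, ‖x u - x v‖ ^ 2 =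
      ∑ i, (b.repr (x u) i - b.repr (x v) i) ^ 2 := fun u v => by
    rw [← b.repr.norm_map, map_sub, EuclideanSpace.real_norm_sq_eq]
    rfl
  calc _ = ∑ i, cheeger G ^ 2 * ∑ u, ∑ v,
          G.degree u * G.degree v * (b.repr (x u) i - b.repr (x v) i) ^ 2 := by
        simp only [hnorm, mul_sum, sum_comm (s := univ (α := Fin _))]
    _ ≤ ∑ i, 2 * vol G univ * ∑ u, ∑ v ∈ G.neighborFinset u,
          (b.repr (x u) i - b.repr (x v) i) ^ 2 :=
        sum_le_sum fun i _ => cheeger_sq_mul_sum_sum_sub_sq_le G fun v => b.repr (x v) i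
    _ = _ := by
        simp only [hnorm, ← mul_sum, sum_comm (s := univ (α := Fin _))]

lemma cheeger_sq_mul_sum_sum_sq_sub_inner_sq_le {p : ℝ} {x : V → E} (hx : ∀ v, ‖x v‖ ^ 2 = p) :
    cheeger G ^ 2 * ∑ u, ∑ v, G.degree u * G.degree v * (p ^ 2 - inner ℝ (x u) (x v) ^ 2) ≤
      4 * p * vol G univ * ∑ u, ∑ v ∈ G.neighborFinset u, (p + inner ℝ (x u) (x v)) := by
  have h := cheeger_sq_mul_sum_sum_norm_sub_sq_le G fun v => x v ⊗ₜ[ℝ] x v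
  simp only [norm_tmul_self_sub_tmul_self_sq (hx _) (hx _), mul_left_comm _ (2 : ℝ),
    ← mul_sum] at h
  have hterm : ∀ u v, p ^ 2 - inner ℝ (x u) (x v) ^ 2 ≤ 2 * p * (p + inner ℝ (x u) (x v)) :=
    fun u v => by nlinarith [sq_nonneg (p + inner ℝ (x u) (x v))]
  calc _ ≤ vol G univ * ∑ u, ∑ v ∈ G.neighborFinset u,
          2 * (p ^ 2 - inner ℝ (x u) (x v) ^ 2) := by
        simp only [← mul_sum]
        linarith
    _ ≤ vol G univ * ∑ u, ∑ v ∈ G.neighborFinset u,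
          2 * (2 * p * (p + inner ℝ (x u) (x v))) := by
        gcongr
        · exact vol_nonneg G univ
        · exact hterm _ _
    _ = _ := by
        simp only [← mul_sum]
        ring

end Cheeger

section Spectrum

lemma mem_spectrum_of_charpoly_eq_prod {K n ι : Type*} [Field K] [Fintype n] [DecidableEq n]
    [Fintype ι] {M : Matrix n n K} {μs : ι → K} (hM : M.charpoly = ∏ i, (X - C (μs i))) (i : ι) :
    μs i ∈ spectrum K M := by
  rw [Matrix.mem_spectrum_iff_isRoot_charpoly, hM, IsRoot, eval_prod]
  exact prod_eq_zero (mem_univ i) (by simp)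

lemma commute_permMatrix_iff {n R : Type*} [Fintype n] [DecidableEq n] [NonAssocSemiring R]
    {M : Matrix n n R} (σ : Equiv.Perm n) :
    Commute M (σ.permMatrix R) ↔ M.submatrix σ σ = M := by
  rw [commute_iff_eq, PEquiv.mul_toMatrix_toPEquiv, PEquiv.toMatrix_toPEquiv_mul]
  constructor <;> intro h
  · simpa using congrArg (fun N => N.submatrix id σ) h.symm
  · simpa using congrArg (fun N => N.submatrix id σ.symm) h.symm

variable {V : Type*} [Fintype V] {M : Matrix V V ℝ} {μ : ℝ}

/-- The spectral projection of a real symmetric matrix `M` onto its eigenspace for `μ`, encoded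
as the functional calculus of the indicator function of `μ` at `M` (hence `0` if `M` is not
symmetric). -/
def eigenprojection (M : Matrix V V ℝ) (μ : ℝ) : Matrix V V ℝ :=
  cfc (Pi.single μ 1 : ℝ → ℝ) M

lemma continuousOn_spectrum (f : ℝ → ℝ) : ContinuousOn f (spectrum ℝ M) :=
  M.finite_real_spectrum.continuousOn f

lemma isStarProjection_eigenprojection (M : Matrix V V ℝ) (μ : ℝ) :
    IsStarProjection (eigenprojection M μ) where
  isIdempotentElem := by
    rw [IsIdempotentElem, eigenprojection,
      ← cfc_mul _ _ _ (continuousOn_spectrum _) (continuousOn_spectrum _)]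
    congr 1
    ext x
    simp [Pi.single_apply]
  isSelfAdjoint := cfc_predicate _ _

lemma mul_eigenprojection (hM : M.IsHermitian) :
    M * eigenprojection M μ = μ • eigenprojection M μ := by
  have hsa : IsSelfAdjoint M := hM
  rw [eigenprojection]
  nth_rw 1 [← cfc_id ℝ M]
  rw [← cfc_mul _ _ _ (continuousOn_spectrum _) (continuousOn_spectrum _),
    ← cfc_smul _ _ _ (continuousOn_spectrum _)]
  congr 1
  ext x
  rcases eq_or_ne x μ with rfl | hx <;> simp [*]

lemma trace_eigenprojection (hM : M.IsHermitian) :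
    (eigenprojection M μ).trace = #{i | hM.eigenvalues i = μ} := by
  rw [eigenprojection, hM.cfc_eq, Matrix.IsHermitian.cfc, Unitary.conjStarAlgAut_apply,
    Matrix.trace_mul_cycle]
  simp [Matrix.trace_diagonal, Pi.single_apply]

lemma trace_eigenprojection_eq_one_or_two_le (hM : M.IsHermitian) (hμ : μ ∈ spectrum ℝ M) :
    (eigenprojection M μ).trace = 1 ∨ 2 ≤ (eigenprojection M μ).trace := by
  rw [hM.spectrum_real_eq_range_eigenvalues] at hμ
  obtain ⟨i, hi⟩ := hμ
  have hpos : 0 < #{i | hM.eigenvalues i = μ} := card_pos.2 ⟨i, by simpa using hi⟩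
  rw [trace_eigenprojection hM, Nat.cast_eq_one, Nat.ofNat_le_cast]
  omega

lemma eigenprojection_submatrix {σ : Equiv.Perm V} (hσ : M.submatrix σ σ = M) :
    (eigenprojection M μ).submatrix σ σ = eigenprojection M μ :=
  (commute_permMatrix_iff σ).1 (((commute_permMatrix_iff σ).2 hσ).cfc_real _)

end Spectrum

section StarProjection

variable {V : Type*} [Fintype V] {P : Matrix V V ℝ} {p : ℝ}

lemma inner_toLp_row (hP : IsStarProjection P) (u v : V) :
    inner ℝ (WithLp.toLp 2 (P u)) (WithLp.toLp 2 (P v)) = P u v := by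
  have hsymm : star P = P := hP.isSelfAdjoint
  have h : (P * star P) u v = P u v := by rw [hsymm, hP.isIdempotentElem.eq]
  rw [← h]
  simp [Matrix.mul_apply, EuclideanSpace.inner_eq_star_dotProduct, dotProduct, mul_comm]

lemma norm_toLp_row_sq (hP : IsStarProjection P) (v : V) :
    ‖(WithLp.toLp 2 (P v) : EuclideanSpace ℝ V)‖ ^ 2 = P v v := by
  rw [← real_inner_self_eq_norm_sq, inner_toLp_row hP]

lemma sum_sum_sq_eq_trace (hP : IsStarProjection P) : ∑ u, ∑ v, P u v ^ 2 = P.trace := by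
  simp [Matrix.trace, ← norm_toLp_row_sq hP, EuclideanSpace.real_norm_sq_eq]

lemma sq_apply_le_mul_diag (hP : IsStarProjection P) (u v : V) : P u v ^ 2 ≤ P u u * P v v := by
  rw [← norm_toLp_row_sq hP u, ← norm_toLp_row_sq hP v, ← inner_toLp_row hP, ← mul_pow, ← sq_abs]
  gcongr
  exact abs_real_inner_le_norm _ _

lemma card_mul_diag_eq_trace (hp : ∀ v, P v v = p) : Fintype.card V * p = P.trace := by
  simp [Matrix.trace, hp]

lemma sum_sum_sq_diag_sub_sq_eq (hP : IsStarProjection P) (hp : ∀ v, P v v = p) :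
    ∑ u, ∑ v, (p ^ 2 - P u v ^ 2) = P.trace ^ 2 - P.trace := by
  simp only [sum_sub_distrib, sum_sum_sq_eq_trace hP]
  rw [← card_mul_diag_eq_trace hp]
  simp only [sum_const, card_univ, nsmul_eq_mul]
  ring

lemma sq_apply_eq_sq_diag_of_trace_eq_one (hP : IsStarProjection P) (hp : ∀ v, P v v = p)
    (htr : P.trace = 1) (u v : V) : P u v ^ 2 = p ^ 2 := by
  have hterm : ∀ u v, 0 ≤ p ^ 2 - P u v ^ 2 := fun u v => by
    have hle := sq_apply_le_mul_diag hP u v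
    rw [hp, hp] at hle
    linarith
  have hsum := sum_sum_sq_diag_sub_sq_eq hP hp
  rw [htr, one_pow, sub_self, sum_eq_zero_iff_of_nonneg fun u _ =>
    sum_nonneg fun v _ => hterm u v] at hsum
  have hrow := (sum_eq_zero_iff_of_nonneg fun v _ => hterm u v).1 (hsum u (mem_univ u))
  linarith [hrow v (mem_univ v)]

end StarProjection

section NormAdj

variable {V : Type*} [Fintype V] {G : SimpleGraph V} {f : V → ℝ} {d : ℕ} {μ : ℝ}

lemma isHermitian_normAdj (hreg : G.IsRegularOfDegree d) : (normAdj G).IsHermitian := by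
  ext u v
  simp [normAdj, hreg.degree_eq, G.adj_comm]

lemma normAdj_submatrix_iso (φ : G ≃g G) :
    (normAdj G).submatrix φ.toEquiv φ.toEquiv = normAdj G := by
  ext u v
  have hadj : G.Adj (φ u) (φ v) ↔ G.Adj u v := φ.map_adj_iff
  simp [normAdj, hadj]

lemma exists_eigenprojection_diag_eq (hvt : VertexTransitive G) (μ : ℝ) :
    ∃ p, ∀ v, eigenprojection (normAdj G) μ v v = p := by
  rcases isEmpty_or_nonempty V with _ | ⟨⟨o⟩⟩
  · exact ⟨0, isEmptyElim⟩
  refine ⟨eigenprojection (normAdj G) μ o o, fun v => ?_⟩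
  obtain ⟨φ, rfl⟩ := hvt o v
  exact congrFun (congrFun (eigenprojection_submatrix (normAdj_submatrix_iso φ)) o) o

lemma sum_neighborFinset_of_normAdj_mulVec_eq_smul
    (hf : (normAdj G).mulVec f = μ • f) (u : V) :
    ∑ v ∈ G.neighborFinset u, f v = G.degree u * (μ * f u) := by
  have hu : (G.degree u : ℝ)⁻¹ * ∑ v ∈ G.neighborFinset u, f v = μ * f u := by
    rw [← smul_eq_mul μ, ← Pi.smul_apply, ← hf]
    simp [normAdj, Matrix.mulVec, dotProduct, mul_sum, G.neighborFinset_eq_filter, sum_filter]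
  rcases eq_or_ne (G.degree u) 0 with hdeg | hdeg
  · rw [card_eq_zero.1 hdeg, hdeg]
    simp
  · rw [← hu, mul_inv_cancel_left₀ (Nat.cast_ne_zero.2 hdeg)]

lemma mul_neg_of_adj_of_sq_eq_sq {c : ℝ} (hc₀ : c ≠ 0) (hc : ∀ v, f v ^ 2 = c ^ 2)
    (hf : (normAdj G).mulVec f = μ • f) {u v : V} (hμ : G.degree u * (1 + μ) < 2)
    (huv : G.Adj u v) : f u * f v < 0 := by
  have hc2 : 0 < c ^ 2 := by positivity
  have hsq : ∀ w, (f u * f w) ^ 2 = (c ^ 2) ^ 2 := fun w => by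
    rw [mul_pow, hc, hc, ← pow_two]
  have hterm : ∀ w, 0 ≤ c ^ 2 + f u * f w := fun w => by
    linarith [(abs_le_of_sq_le_sq' (hsq w).le hc2.le).1]
  have hsum : ∑ w ∈ G.neighborFinset u, (c ^ 2 + f u * f w) =
      G.degree u * (1 + μ) * c ^ 2 := by
    rw [sum_add_distrib, ← mul_sum,
      sum_neighborFinset_of_normAdj_mulVec_eq_smul hf, ← hc u, sum_const,
      G.card_neighborFinset_eq_degree, nsmul_eq_mul]
    ring
  have hlt : c ^ 2 + f u * f v < 2 * c ^ 2 := by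
    calc _ ≤ ∑ w ∈ G.neighborFinset u, (c ^ 2 + f u * f w) :=
          single_le_sum (f := fun w => c ^ 2 + f u * f w) (fun w _ => hterm w)
            ((G.mem_neighborFinset u v).2 huv)
      _ < 2 * c ^ 2 := by
          rw [hsum]
          gcongr
  rcases sq_eq_sq_iff_eq_or_eq_neg.1 (hsq v) with hpos | hneg <;> linarith

lemma colorable_two_of_sq_eq_sq {c : ℝ} (hc₀ : c ≠ 0) (hc : ∀ v, f v ^ 2 = c ^ 2)
    (hf : (normAdj G).mulVec f = μ • f) (hμ : ∀ u, G.degree u * (1 + μ) < 2) :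
    G.Colorable 2 := by
  let sign : G.Coloring Prop := SimpleGraph.Coloring.mk (fun v => 0 < f v)
    fun {u v} huv hsign => by
      have hneg := mul_neg_of_adj_of_sq_eq_sq hc₀ hc hf (hμ u) huv
      have hiff : 0 < f u ↔ 0 < f v := hsign.to_iff
      rcases mul_neg_iff.1 hneg with ⟨hu, hv⟩ | ⟨hu, hv⟩
      · exact hv.not_gt (hiff.1 hu)
      · exact hu.not_gt (hiff.2 hv)
  simpa using sign.colorable

lemma ne_zero_of_isRegularOfDegree_of_not_colorable (hreg : G.IsRegularOfDegree d)
    (hnonbip : ¬ G.Colorable 2) : d ≠ 0 := by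
  rintro rfl
  refine hnonbip (SimpleGraph.Coloring.mk (fun _ => (0 : Fin 2)) fun {u v} huv => ?_).colorable
  exact absurd (hreg.degree_eq u) (huv.degree_pos_left).ne'

end NormAdj

section ConstantDiagonal

variable {V : Type*} [Fintype V] {G : SimpleGraph V} {d : ℕ} {P : Matrix V V ℝ} {p μ : ℝ}

lemma normAdj_mulVec_col (heig : normAdj G * P = μ • P) (w : V) :
    (normAdj G).mulVec (P.col w) = μ • P.col w := by
  ext u
  exact congrFun (congrFun heig u) w

lemma sum_sum_neighborFinset_diag_add (hp : ∀ v, P v v = p) (heig : normAdj G * P = μ • P) :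
    ∑ u, ∑ v ∈ G.neighborFinset u, (p + P v u) = vol G univ * p * (1 + μ) := by
  have hvertex : ∀ u, ∑ v ∈ G.neighborFinset u, (p + P v u) =
      G.degree u * p * (1 + μ) := fun u => by
    have hcol := sum_neighborFinset_of_normAdj_mulVec_eq_smul (normAdj_mulVec_col heig u) u
    simp only [Matrix.col_apply, hp] at hcol
    rw [sum_add_distrib, hcol, sum_const, G.card_neighborFinset_eq_degree, nsmul_eq_mul]
    ring
  simp only [hvertex, vol, sum_mul]

lemma cheeger_sq_mul_trace_sq_sub_trace_le (hreg : G.IsRegularOfDegree d) (hd : d ≠ 0)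
    (hP : IsStarProjection P) (hp : ∀ v, P v v = p) (heig : normAdj G * P = μ • P) :
    cheeger G ^ 2 * (P.trace ^ 2 - P.trace) ≤ 4 * P.trace ^ 2 * (1 + μ) := by
  have h := cheeger_sq_mul_sum_sum_sq_sub_inner_sq_le G (p := p)
    (x := fun v => WithLp.toLp 2 (P v)) fun v => by rw [norm_toLp_row_sq hP, hp]
  have hedges := sum_sum_neighborFinset_comm G fun u v => p + P u v
  simp only [inner_toLp_row hP, hreg.degree_eq, ← mul_sum,
    sum_sum_sq_diag_sub_sq_eq hP hp] at h
  rw [hedges, sum_sum_neighborFinset_diag_add hp heig] at h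
  have hvol : vol G univ * p = d * P.trace := by
    rw [← card_mul_diag_eq_trace hp]
    simp only [vol, hreg.degree_eq, sum_const, card_univ, nsmul_eq_mul]
    ring
  have hd2 : (0 : ℝ) < d ^ 2 := by positivity
  refine le_of_mul_le_mul_left ?_ hd2
  calc _ = cheeger G ^ 2 * (d * d * (P.trace ^ 2 - P.trace)) := by ring
    _ ≤ _ := h
    _ = 4 * (vol G univ * p) ^ 2 * (1 + μ) := by ring
    _ = _ := by
        rw [hvol]
        ring

lemma cheeger_sq_div_eight_le_of_two_le_trace (hreg : G.IsRegularOfDegree d) (hd : d ≠ 0)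
    (hP : IsStarProjection P) (hp : ∀ v, P v v = p) (heig : normAdj G * P = μ • P)
    (htr : 2 ≤ P.trace) : cheeger G ^ 2 / 8 ≤ 1 + μ := by
  have h := cheeger_sq_mul_trace_sq_sub_trace_le hreg hd hP hp heig
  have htrace : P.trace ^ 2 ≤ 2 * (P.trace ^ 2 - P.trace) := by nlinarith
  have hcheeger : P.trace ^ 2 * (cheeger G ^ 2 / 8) ≤ P.trace ^ 2 * (1 + μ) := by
    linarith [mul_le_mul_of_nonneg_left htrace (sq_nonneg (cheeger G))]
  exact le_of_mul_le_mul_left hcheeger (by positivity)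

lemma two_div_le_of_trace_eq_one (hnonbip : ¬ G.Colorable 2) (hreg : G.IsRegularOfDegree d)
    (hd : d ≠ 0) (hP : IsStarProjection P) (hp : ∀ v, P v v = p)
    (heig : normAdj G * P = μ • P) (htr : P.trace = 1) : 2 / (d : ℝ) ≤ 1 + μ := by
  have hcard : Fintype.card V * p = 1 := (card_mul_diag_eq_trace hp).trans htr
  have hV : Nonempty V := by
    by_contra! hempty
    simp at hcard
  obtain ⟨w⟩ := hV
  rw [div_le_iff₀' (by positivity)]
  by_contra! hlt
  exact hnonbip <| colorable_two_of_sq_eq_sq (right_ne_zero_of_mul_eq_one hcard)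
    (fun v => sq_apply_eq_sq_diag_of_trace_eq_one hP hp htr v w) (normAdj_mulVec_col heig w)
    fun u => by rwa [hreg.degree_eq]

end ConstantDiagonal

theorem one_add_smallest_ge_min_cheeger_general {V : Type*} [Fintype V] (G : SimpleGraph V)
    (hnonbip : ¬ G.Colorable 2) (hvt : VertexTransitive G) (d : ℕ)
    (hreg : G.IsRegularOfDegree d) {μ : ℝ} (hμ : μ ∈ spectrum ℝ (normAdj G)) :
    1 + μ ≥ min (2 / (d : ℝ)) (cheeger G ^ 2 / 8) := by
  have hherm := isHermitian_normAdj hreg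
  have hd := ne_zero_of_isRegularOfDegree_of_not_colorable hreg hnonbip
  have hproj := isStarProjection_eigenprojection (normAdj G) μ
  have heig := mul_eigenprojection (μ := μ) hherm
  obtain ⟨p, hp⟩ := exists_eigenprojection_diag_eq hvt μ
  rcases trace_eigenprojection_eq_one_or_two_le hherm hμ with htr | htr
  · exact min_le_of_left_le (two_div_le_of_trace_eq_one hnonbip hreg hd hproj hp heig htr)
  · exact min_le_of_right_le (cheeger_sq_div_eight_le_of_two_le_trace hreg hd hproj hp heig htr)

lemma sqrt_three_sub_one_sq_le_one : (√3 - 1) ^ 2 ≤ 1 := by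
  rw [sq_le_one_iff_abs_le_one, abs_le]
  constructor
  · linarith [Real.sqrt_nonneg 3]
  · linarith [(Real.sqrt_le_left zero_le_two).2 (by norm_num : (3 : ℝ) ≤ 2 ^ 2)]

/-- **Corollary 1, first estimate**: for a finite, connected, non-bipartite,
vertex-transitive graph of degree `d` with normalized adjacency eigenvalues
`μs (n-1) = μₙ ≤ ⋯ ≤ μs 0 = μ₁ = 1` (listed with multiplicity, in decreasing order, as
the roots of the characteristic polynomial of `D⁻¹A`) and edge-expansion `h`, one has
`1 + μₙ ≥ min {2/d, ((√3-1)²/8)·h²}`. Non-bipartiteness is expressed as the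
non-existence of a proper 2-coloring. -/
theorem one_add_smallest_ge_min_cheeger {V : Type*} [Fintype V] (G : SimpleGraph V)
    (hconn : G.Connected) (hn : 2 ≤ Fintype.card V)
    (hnonbip : ¬ G.Colorable 2)
    (hvt : VertexTransitive G)
    (d : ℕ) (hreg : G.IsRegularOfDegree d)
    (μs : Fin (Fintype.card V) → ℝ) (hanti : Antitone μs)
    (hchar : (normAdj G).charpoly = ∏ i, (X - C (μs i)))
    (hμ1 : μs ⟨0, by omega⟩ = 1) :
    1 + μs ⟨Fintype.card V - 1, by omega⟩ ≥
      min (2 / (d : ℝ)) ((Real.sqrt 3 - 1) ^ 2 / 8 * cheeger G ^ 2) :=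
  (min_le_min_left _ (by nlinarith [sqrt_three_sub_one_sq_le_one])).trans
    (one_add_smallest_ge_min_cheeger_general G hnonbip hvt d hreg
      (mem_spectrum_of_charpoly_eq_prod hchar _))

end
end

section
/- Let G=(V,E) be a finite connected graph with normalized adjacency eigenvalues μ_n ≤ … ≤ μ_2 ≤ μ_1 = 1. Then 1 + μ_{n-1} ≥ 2(√(1 + (1−μ_2)/4) − 1)^2. -/
/-!
Let `N` be a symmetric matrix with nonnegative entries, with eigenvalues `μ₀ ≥ μ₁ ≥ ⋯`, and let
`p` be a unit eigenvector for `μ₀`. Then `-⟪x, N x⟫ ≤ ⟪|x|, N |x|⟫`, so if `⟪x, N x⟫ ≤ m ‖x‖²`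
with `m` close to `-μ₀`, then the Rayleigh quotient of `|x|` is close to `μ₀`, and the gap
`μ₀ - μ₁` forces `|x|` to be nearly parallel to `p`. The two smallest eigenvalues give a whole
plane of such `x`, and in it three unit vectors `x`, `y`, `z` at mutual angle `2π/3`. Their absolute
values cannot all be close to a multiple of one vector: real numbers with `a + b + c = 0` satisfy
`(|a| + |b| + |c|)² ≤ 8/3 (a² + b² + c²)`, so `⟪p, |x|⟫² ≤ 8/9` for at least one of the three. This
gives the bound `(μ₀ - μ₁) / 9 ≤ μ₀ + μ_{n-2}`, linear in the gap. The normalized adjacency matrix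
`D⁻¹A` has the spectrum of the symmetric matrix `D^{-1/2}AD^{-1/2}`, to which this applies.
-/

open Finset Polynomial

noncomputable section
open scoped Classical

section Eigenbasis

open scoped RealInnerProductSpace

variable {ι E : Type*} [Fintype ι] [NormedAddCommGroup E] [InnerProductSpace ℝ E]
  {b : OrthonormalBasis ι ℝ E} {T : E →ₗ[ℝ] E} {μ : ι → ℝ}

lemma inner_map_self_sub_eq_sum_of_eigenbasis (hT : ∀ i, T (b i) = μ i • b i) (m : ℝ) (x : E) :
    ⟪x, T x⟫ - m * ‖x‖ ^ 2 = ∑ i, (μ i - m) * ⟪b i, x⟫ ^ 2 := by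
  have hTx : T x = ∑ i, ⟪b i, x⟫ • μ i • b i := by
    conv_lhs => rw [← b.sum_repr' x]
    simp only [map_sum, map_smul, hT]
  rw [hTx, ← b.sum_sq_inner_right, inner_sum, mul_sum, ← sum_sub_distrib]
  refine sum_congr rfl fun i _ => ?_
  rw [inner_smul_right, inner_smul_right, real_inner_comm]
  ring

lemma inner_map_self_le_of_eigenbasis (hT : ∀ i, T (b i) = μ i • b i) {m : ℝ} {x : E}
    (hx : ∀ i, μ i ≤ m ∨ ⟪b i, x⟫ = 0) : ⟪x, T x⟫ ≤ m * ‖x‖ ^ 2 := by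
  rw [← sub_nonpos, inner_map_self_sub_eq_sum_of_eigenbasis hT]
  refine sum_nonpos fun i _ => ?_
  rcases hx i with hi | hi
  · exact mul_nonpos_of_nonpos_of_nonneg (sub_nonpos.2 hi) (sq_nonneg _)
  · simp [hi]

lemma inner_map_self_le_add_of_eigenbasis (hT : ∀ i, T (b i) = μ i • b i) {i₀ : ι} {m : ℝ}
    (hm : ∀ i ≠ i₀, μ i ≤ m) (x : E) :
    ⟪x, T x⟫ ≤ m * ‖x‖ ^ 2 + (μ i₀ - m) * ⟪b i₀, x⟫ ^ 2 := by
  rw [← sub_le_iff_le_add', inner_map_self_sub_eq_sum_of_eigenbasis hT,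
    ← add_sum_erase _ _ (mem_univ i₀), add_le_iff_nonpos_right]
  exact sum_nonpos fun i hi =>
    mul_nonpos_of_nonpos_of_nonneg (sub_nonpos.2 (hm i (ne_of_mem_erase hi))) (sq_nonneg _)

end Eigenbasis

lemma exists_unit_triple_sum_eq_zero {E : Type*} [NormedAddCommGroup E] [InnerProductSpace ℝ E]
    {f g : E} (hf : ‖f‖ = 1) (hg : ‖g‖ = 1) (hfg : inner ℝ f g = 0) :
    ∃ x : Fin 3 → E, (∀ i, x i ∈ Submodule.span ℝ {f, g}) ∧ (∀ i, ‖x i‖ = 1) ∧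
      ∑ i, x i = 0 := by
  have hnorm {s t : ℝ} (hst : s ^ 2 + t ^ 2 = 1) : ‖s • f + t • g‖ = 1 := by
    rw [← sq_eq_sq₀ (norm_nonneg _) zero_le_one, norm_add_sq_real, norm_smul, norm_smul,
      inner_smul_left, inner_smul_right, hf, hg, hfg]
    simpa using hst
  have hsqrt : √(3 : ℝ) ^ 2 = 3 := Real.sq_sqrt (by norm_num)
  let s : Fin 3 → ℝ := ![1, -1 / 2, -1 / 2]
  let t : Fin 3 → ℝ := ![0, √3 / 2, -√3 / 2]
  have hs : ∑ i, s i = 0 := by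
    rw [Fin.sum_univ_three]
    change (1 : ℝ) + -1 / 2 + -1 / 2 = 0
    norm_num
  have ht : ∑ i, t i = 0 := by simp [t, Fin.sum_univ_three, neg_div]
  refine ⟨fun i => s i • f + t i • g, fun i => Submodule.mem_span_pair.2 ⟨_, _, rfl⟩,
    fun i => hnorm ?_, ?_⟩
  · fin_cases i <;> simp [s, t, div_pow, hsqrt] <;> norm_num
  · simp only [sum_add_distrib, ← sum_smul, hs, ht, zero_smul, add_zero]

lemma sq_sum_abs_le_of_sum_eq_zero {a : Fin 3 → ℝ} (ha : ∑ i, a i = 0) :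
    (∑ i, |a i|) ^ 2 ≤ 8 / 3 * ∑ i, a i ^ 2 := by
  have key {r s t : ℝ} (h : r + s + t = 0) (hst : 0 ≤ s * t) :
      (|r| + |s| + |t|) ^ 2 ≤ 8 / 3 * (r ^ 2 + s ^ 2 + t ^ 2) := by
    have hr : r = -(s + t) := by linarith
    have habs : |r| = |s| + |t| := by
      rw [hr, abs_neg, (abs_add_eq_add_abs_iff s t).2 (mul_nonneg_iff.1 hst)]
    calc (|r| + |s| + |t|) ^ 2 = 4 * r ^ 2 := by rw [add_assoc, ← habs, ← sq_abs r]; ring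
      _ ≤ 8 / 3 * (r ^ 2 + s ^ 2 + t ^ 2) := by rw [hr]; linarith [sq_nonneg (s - t)]
  simp only [Fin.sum_univ_three] at ha ⊢
  obtain h | h | h : 0 ≤ a 1 * a 2 ∨ 0 ≤ a 2 * a 0 ∨ 0 ≤ a 0 * a 1 := by
    by_contra! h
    nlinarith [mul_pos_of_neg_of_neg h.1 h.2.1, sq_nonneg (a 2)]
  · exact key ha h
  · linarith [key (r := a 1) (by linarith) h]
  · linarith [key (r := a 2) (by linarith) h]

section NonnegMatrix

open scoped RealInnerProductSpace

variable {V : Type*}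

/-- The entrywise absolute value `|x|` of a Euclidean vector `x`. It is a definition because
`EuclideanSpace ℝ V` has no lattice structure, hence no `|·|`. -/
def entrywiseAbs (x : EuclideanSpace ℝ V) : EuclideanSpace ℝ V :=
  WithLp.toLp 2 |x.ofLp|

@[simp]
lemma entrywiseAbs_apply (x : EuclideanSpace ℝ V) (v : V) : entrywiseAbs x v = |x v| := rfl

variable [Fintype V]

@[simp]
lemma norm_entrywiseAbs (x : EuclideanSpace ℝ V) : ‖entrywiseAbs x‖ = ‖x‖ := by
  simp [EuclideanSpace.norm_eq]

lemma abs_inner_le_inner_entrywiseAbs (x y : EuclideanSpace ℝ V) :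
    |⟪x, y⟫| ≤ ⟪entrywiseAbs x, entrywiseAbs y⟫ := by
  simp only [PiLp.inner_apply, RCLike.inner_apply, conj_trivial, entrywiseAbs_apply, ← abs_mul]
  exact abs_sum_le_sum_abs _ _

lemma norm_sum_entrywiseAbs_sq_le {x : Fin 3 → EuclideanSpace ℝ V} (hx : ∑ i, x i = 0) :
    ‖∑ i, entrywiseAbs (x i)‖ ^ 2 ≤ 8 / 3 * ∑ i, ‖x i‖ ^ 2 := by
  simp only [EuclideanSpace.real_norm_sq_eq, WithLp.ofLp_sum, Finset.sum_apply, entrywiseAbs_apply]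
  rw [sum_comm, mul_sum]
  refine sum_le_sum fun v _ => sq_sum_abs_le_of_sum_eq_zero ?_
  simpa using congrArg (fun y : EuclideanSpace ℝ V => y v) hx

lemma exists_inner_entrywiseAbs_sq_le (p : EuclideanSpace ℝ V) {x : Fin 3 → EuclideanSpace ℝ V}
    (hx : ∀ i, ‖x i‖ = 1) (hsum : ∑ i, x i = 0) :
    ∃ i, ⟪p, entrywiseAbs (x i)⟫ ^ 2 ≤ 8 / 9 * ‖p‖ ^ 2 := by
  obtain ⟨i, hi⟩ := Finite.exists_min fun i => |⟪p, entrywiseAbs (x i)⟫|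
  have hbound : 3 * |⟪p, entrywiseAbs (x i)⟫| ≤ ‖p‖ * ‖∑ j, entrywiseAbs (x j)‖ :=
    calc 3 * |⟪p, entrywiseAbs (x i)⟫| ≤ ∑ j, |⟪p, entrywiseAbs (x j)⟫| := by
          simpa using card_nsmul_le_sum univ _ _ fun j _ => hi j
      _ ≤ ∑ j, ⟪entrywiseAbs p, entrywiseAbs (x j)⟫ := sum_le_sum fun j _ => by
          simpa [entrywiseAbs] using abs_inner_le_inner_entrywiseAbs p (entrywiseAbs (x j))
      _ = ⟪entrywiseAbs p, ∑ j, entrywiseAbs (x j)⟫ := (inner_sum _ _ _).symm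
      _ ≤ ‖p‖ * ‖∑ j, entrywiseAbs (x j)‖ := by
          simpa using real_inner_le_norm (entrywiseAbs p) (∑ j, entrywiseAbs (x j))
  have hnorm : ‖∑ j, entrywiseAbs (x j)‖ ^ 2 ≤ 8 := by
    have h := norm_sum_entrywiseAbs_sq_le hsum
    simp only [hx, one_pow, sum_const, card_univ, Fintype.card_fin, nsmul_eq_mul] at h
    norm_num at h
    exact h
  have hsq : (3 * ⟪p, entrywiseAbs (x i)⟫) ^ 2 ≤ ‖p‖ ^ 2 * 8 :=
    calc (3 * ⟪p, entrywiseAbs (x i)⟫) ^ 2 = (3 * |⟪p, entrywiseAbs (x i)⟫|) ^ 2 := by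
          rw [mul_pow, mul_pow, sq_abs]
      _ ≤ (‖p‖ * ‖∑ j, entrywiseAbs (x j)‖) ^ 2 := by gcongr
      _ ≤ ‖p‖ ^ 2 * 8 := by rw [mul_pow]; gcongr
  exact ⟨i, by linarith⟩

variable {N : Matrix V V ℝ}

lemma neg_inner_toEuclideanLin_le_entrywiseAbs (hN : ∀ u v, 0 ≤ N u v)
    (x : EuclideanSpace ℝ V) :
    -⟪x, N.toEuclideanLin x⟫ ≤ ⟪entrywiseAbs x, N.toEuclideanLin (entrywiseAbs x)⟫ := by
  simp only [PiLp.inner_apply, Matrix.toLpLin_apply, Matrix.mulVec, dotProduct,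
    RCLike.inner_apply, conj_trivial, ← sum_neg_distrib, sum_mul, entrywiseAbs_apply]
  refine sum_le_sum fun u _ => sum_le_sum fun v _ => ?_
  calc -(N u v * x v * x u) ≤ |N u v * x v * x u| := neg_le_abs _
    _ = N u v * |x v| * |x u| := by rw [abs_mul, abs_mul, abs_of_nonneg (hN u v)]

variable {ι : Type*} [Fintype ι] {b : OrthonormalBasis ι ℝ (EuclideanSpace ℝ V)} {μ : ι → ℝ}

lemma neg_eigenvalue_le_of_nonneg (hN : ∀ u v, 0 ≤ N u v)
    (hb : ∀ i, N.toEuclideanLin (b i) = μ i • b i) {i₀ : ι} (hμ : ∀ i, μ i ≤ μ i₀) (k : ι) :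
    -μ k ≤ μ i₀ := by
  calc -μ k = -⟪b k, N.toEuclideanLin (b k)⟫ := by simp [hb, inner_smul_right]
    _ ≤ ⟪entrywiseAbs (b k), N.toEuclideanLin (entrywiseAbs (b k))⟫ :=
        neg_inner_toEuclideanLin_le_entrywiseAbs hN _
    _ ≤ μ i₀ * ‖entrywiseAbs (b k)‖ ^ 2 :=
        inner_map_self_le_of_eigenbasis hb fun i => .inl (hμ i)
    _ = μ i₀ := by simp

lemma gap_mul_sub_inner_entrywiseAbs_sq_le (hN : ∀ u v, 0 ≤ N u v)
    (hb : ∀ i, N.toEuclideanLin (b i) = μ i • b i) {i₀ : ι} {m₁ m : ℝ}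
    (hm₁ : ∀ i ≠ i₀, μ i ≤ m₁) {x : EuclideanSpace ℝ V}
    (hx : ⟪x, N.toEuclideanLin x⟫ ≤ m * ‖x‖ ^ 2) :
    (μ i₀ - m₁) * (‖x‖ ^ 2 - ⟪b i₀, entrywiseAbs x⟫ ^ 2) ≤ (μ i₀ + m) * ‖x‖ ^ 2 := by
  have habs := neg_inner_toEuclideanLin_le_entrywiseAbs hN x
  have hgap := inner_map_self_le_add_of_eigenbasis hb hm₁ (entrywiseAbs x)
  rw [norm_entrywiseAbs] at hgap
  linarith

lemma gap_div_nine_le_of_eigenbasis (hN : ∀ u v, 0 ≤ N u v)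
    (hb : ∀ i, N.toEuclideanLin (b i) = μ i • b i) {i₀ : ι} {m₁ m : ℝ}
    (hm₁ : ∀ i ≠ i₀, μ i ≤ m₁) (hgap : m₁ ≤ μ i₀) {j k : ι} (hjk : j ≠ k)
    (hj : μ j ≤ m) (hk : μ k ≤ m) : (μ i₀ - m₁) / 9 ≤ μ i₀ + m := by
  obtain ⟨x, hspan, hnorm, hsum⟩ :=
    exists_unit_triple_sum_eq_zero (b.norm_eq_one j) (b.norm_eq_one k) (b.inner_eq_zero hjk)
  obtain ⟨l, hl⟩ := exists_inner_entrywiseAbs_sq_le (b i₀) hnorm hsum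
  have hlow : ⟪x l, N.toEuclideanLin (x l)⟫ ≤ m * ‖x l‖ ^ 2 := by
    refine inner_map_self_le_of_eigenbasis hb fun i => ?_
    obtain ⟨s, t, hst⟩ := Submodule.mem_span_pair.1 (hspan l)
    by_cases hij : i = j
    · exact .inl (hij ▸ hj)
    by_cases hik : i = k
    · exact .inl (hik ▸ hk)
    · right
      simp [← hst, inner_add_right, inner_smul_right, b.inner_eq_zero hij, b.inner_eq_zero hik]
  have hbound := gap_mul_sub_inner_entrywiseAbs_sq_le hN hb hm₁ hlow
  rw [hnorm, one_pow, mul_one] at hbound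
  rw [b.norm_eq_one, one_pow, mul_one] at hl
  calc (μ i₀ - m₁) / 9 = (μ i₀ - m₁) * (1 - 8 / 9) := by ring
    _ ≤ (μ i₀ - m₁) * (1 - ⟪b i₀, entrywiseAbs (x l)⟫ ^ 2) :=
        mul_le_mul_of_nonneg_left (by linarith) (sub_nonneg.2 hgap)
    _ ≤ μ i₀ + m := hbound

end NonnegMatrix

section Charpoly

variable {𝕜 : Type*} [RCLike 𝕜] {n : ℕ} {μ : Fin n → ℝ}

lemma eigenvalues_eq_of_charpoly_eq {E : Type*} [NormedAddCommGroup E]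
    [InnerProductSpace 𝕜 E] [FiniteDimensional 𝕜 E] {T : E →ₗ[𝕜] E} (hT : T.IsSymmetric)
    (hn : Module.finrank 𝕜 E = n) (hμ : Antitone μ)
    (hchar : T.charpoly = ∏ i, (X - C (μ i : 𝕜))) : hT.eigenvalues hn = μ := by
  have hroots : T.charpoly.roots = univ.val.map fun i => (μ i : 𝕜) := by
    rw [hchar, ← roots_multiset_prod_X_sub_C (univ.val.map fun i => (μ i : 𝕜)), Multiset.map_map]
    rfl
  have hperm : (List.ofFn (hT.eigenvalues hn)).Perm (List.ofFn μ) := by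
    rw [← hT.sort_roots_charpoly_eq_eigenvalues hn, hroots, ← Multiset.coe_eq_coe,
      Multiset.sort_eq, Multiset.map_map, ← Fin.univ_val_map]
    simp
  exact List.ofFn_injective
    (hperm.eq_of_sortedGE (hT.eigenvalues_antitone hn).sortedGE_ofFn hμ.sortedGE_ofFn)

variable {V : Type*} [Fintype V] [DecidableEq V] {N : Matrix V V ℝ}

lemma charpoly_toEuclideanLin (N : Matrix V V 𝕜) : N.toEuclideanLin.charpoly = N.charpoly := by
  rw [Matrix.toEuclideanLin_eq_toLin_orthonormal, Matrix.charpoly_toLin]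

lemma exists_eigenbasis_of_charpoly_eq (hN : N.IsHermitian) (hμ : Antitone μ)
    (hchar : N.charpoly = ∏ i, (X - C (μ i))) :
    ∃ b : OrthonormalBasis (Fin n) ℝ (EuclideanSpace ℝ V),
      ∀ i, N.toEuclideanLin (b i) = μ i • b i := by
  have hsymm := Matrix.isSymmetric_toEuclideanLin_iff.2 hN
  have hcard : Module.finrank ℝ (EuclideanSpace ℝ V) = n := by
    rw [finrank_euclideanSpace, ← N.charpoly_natDegree_eq_dim, hchar,
      natDegree_finsetProd_X_sub_C_eq_card, card_univ, Fintype.card_fin]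
  refine ⟨hsymm.eigenvectorBasis hcard, fun i => ?_⟩
  rw [← eigenvalues_eq_of_charpoly_eq hsymm hcard hμ ((charpoly_toEuclideanLin N).trans hchar)]
  exact hsymm.apply_eigenvectorBasis hcard i

lemma sub_mem_Icc_of_charpoly_eq_of_nonneg (hN : N.IsHermitian) (hN₀ : ∀ u v, 0 ≤ N u v)
    (hn : 0 < n) (hμ : Antitone μ) (hchar : N.charpoly = ∏ i, (X - C (μ i))) (k : Fin n) :
    μ ⟨0, hn⟩ - μ k ∈ Set.Icc 0 (2 * μ ⟨0, hn⟩) := by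
  obtain ⟨b, hb⟩ := exists_eigenbasis_of_charpoly_eq hN hμ hchar
  have hle (i : Fin n) : μ i ≤ μ ⟨0, hn⟩ := hμ (Fin.le_def.2 i.val.zero_le)
  have hneg := neg_eigenvalue_le_of_nonneg hN₀ hb hle k
  exact ⟨sub_nonneg.2 (hle k), by linarith⟩

theorem one_add_secondSmallest_ge_of_spectralGap_general (hN : N.IsHermitian)
    (hN₀ : ∀ u v, 0 ≤ N u v) (hn : 2 ≤ n) (hμ : Antitone μ)
    (hchar : N.charpoly = ∏ i, (X - C (μ i))) :
    μ ⟨0, by omega⟩ + μ ⟨n - 2, by omega⟩ ≥ (μ ⟨0, by omega⟩ - μ ⟨1, by omega⟩) / 9 := by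
  obtain ⟨b, hb⟩ := exists_eigenbasis_of_charpoly_eq hN hμ hchar
  have hle_second : ∀ i ≠ (⟨0, by omega⟩ : Fin n), μ i ≤ μ ⟨1, by omega⟩ :=
    fun i hi => hμ (Fin.le_def.2 (Nat.one_le_iff_ne_zero.2 fun h => hi (Fin.ext h)))
  have hne : (⟨n - 2, by omega⟩ : Fin n) ≠ ⟨n - 1, by omega⟩ := by
    rw [Ne, Fin.mk.injEq]
    omega
  exact gap_div_nine_le_of_eigenbasis hN₀ hb hle_second (hμ (Fin.le_def.2 zero_le_one)) hne
    le_rfl (hμ (Fin.le_def.2 (Nat.sub_le_sub_left one_le_two _)))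

end Charpoly

section Graph

variable {V : Type*} [Fintype V] (G : SimpleGraph V)

/-- The symmetric normalization `D^{-1/2} A D^{-1/2}` of the adjacency matrix, which has the
spectrum of `normAdj G` but is symmetric. As in `normAdj`, rows of isolated vertices are zero. -/
def symmNormAdj : Matrix V V ℝ :=
  Matrix.of fun u v =>
    if G.Adj u v then (√(G.degree u : ℝ))⁻¹ * (√(G.degree v : ℝ))⁻¹ else 0

lemma symmNormAdj_nonneg (u v : V) : 0 ≤ symmNormAdj G u v := by
  rw [symmNormAdj, Matrix.of_apply]
  positivity

lemma isHermitian_symmNormAdj : (symmNormAdj G).IsHermitian := by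
  ext u v
  simp [symmNormAdj, G.adj_comm u v, mul_comm]

lemma charpoly_symmNormAdj : (symmNormAdj G).charpoly = (normAdj G).charpoly := by
  set S : Matrix V V ℝ := Matrix.diagonal fun v => (√(G.degree v : ℝ))⁻¹ with hS
  have hsymm : symmNormAdj G = (S * G.adjMatrix ℝ) * S := by
    ext u v
    simp [symmNormAdj, hS, Matrix.diagonal_mul, -SimpleGraph.mul_adjMatrix_apply]
  have hnorm : normAdj G = S * (S * G.adjMatrix ℝ) := by
    ext u v
    simp [normAdj, hS, Matrix.diagonal_mul, ← mul_inv, -SimpleGraph.mul_adjMatrix_apply]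
  rw [hsymm, hnorm, Matrix.charpoly_mul_comm]

end Graph

lemma two_mul_sqrt_sub_one_sq_le {t : ℝ} (ht : t ∈ Set.Icc 0 2) :
    2 * (√(1 + t / 4) - 1) ^ 2 ≤ t / 9 := by
  obtain ⟨ht₀, ht₂⟩ := ht
  have hlower : 0 ≤ √(1 + t / 4) - 1 := sub_nonneg.2 (Real.one_le_sqrt.2 (by linarith))
  have hupper : √(1 + t / 4) - 1 ≤ t / 8 := by
    rw [sub_le_iff_le_add', Real.sqrt_le_iff]
    exact ⟨by positivity, by linarith [sq_nonneg t]⟩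
  calc 2 * (√(1 + t / 4) - 1) ^ 2 ≤ 2 * (t / 8) ^ 2 := by gcongr
    _ ≤ t / 9 := by nlinarith

/-- **Corollary 2, first inequality**: for a finite connected graph with normalized
adjacency eigenvalues `μs (n-1) = μₙ ≤ ⋯ ≤ μs 1 = μ₂ ≤ μs 0 = μ₁ = 1` (listed with
multiplicity, in decreasing order, as the roots of the characteristic polynomial of
`D⁻¹A`), one has `1 + μ_{n-1} ≥ 2(√(1 + (1-μ₂)/4) - 1)²`. -/
theorem one_add_secondSmallest_ge_of_spectralGap {V : Type*} [Fintype V] (G : SimpleGraph V)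
    (hconn : G.Connected) (hn : 2 ≤ Fintype.card V)
    (μs : Fin (Fintype.card V) → ℝ) (hanti : Antitone μs)
    (hchar : (normAdj G).charpoly = ∏ i, (X - C (μs i)))
    (hμ1 : μs ⟨0, by omega⟩ = 1) :
    1 + μs ⟨Fintype.card V - 2, by omega⟩ ≥
      2 * (Real.sqrt (1 + (1 - μs ⟨1, by omega⟩) / 4) - 1) ^ 2 := by
  rw [← charpoly_symmNormAdj] at hchar
  have hgap := one_add_secondSmallest_ge_of_spectralGap_general (isHermitian_symmNormAdj G)
    (symmNormAdj_nonneg G) hn hanti hchar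
  have hmem := sub_mem_Icc_of_charpoly_eq_of_nonneg (isHermitian_symmNormAdj G)
    (symmNormAdj_nonneg G) (by omega) hanti hchar ⟨1, by omega⟩
  rw [hμ1] at hgap
  rw [hμ1, mul_one] at hmem
  exact (two_mul_sqrt_sub_one_sq_le hmem).trans hgap

end
end

section
/- Let G=(V,E) be a finite connected graph with normalized adjacency eigenvalues μ_n ≤ … ≤ μ_2 ≤ μ_1 = 1 and edge-expansion h. Then 1 + μ_{n-1} ≥ ((√3 − 1)^2 / 8) · h^2. -/
open Finset Polynomial

noncomputable section
open scoped Classical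

/-!
Let `f` and `g` be eigenfunctions of `D⁻¹A` for `μ_{n-1}` and `μ_n`, orthonormal in the `L²` space
weighted by the degrees. Every `k = cos θ • f + sin θ • g` has norm `1` and signless Dirichlet
energy `∑ u, ∑ v, w u v * (k u + k v) ^ 2 ≤ 2 * (1 + μ_{n-1})`, and the Dirichlet energy of `|k|`
is no larger because `||k u| - |k v|| ≤ |k u + k v|`. On average over `θ`, `|k u|` equals
`2 / π * √(f u ^ 2 + g u ^ 2)`, so for some `θ` the `L¹` norm of `k` is so far below its
Cauchy–Schwarz bound that the deviation of `|k|` from any constant has squared norm at least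
`1 - 8 / π ^ 2`. Cheeger's inequality about a median of `|k|`, proved by integrating over superlevel
sets, bounds `h ^ 2` times the squared norm of this deviation by the energy of `|k|`. This gives the
constant `1 / 2 - 4 / π ^ 2 ≥ (√3 - 1) ^ 2 / 8`.
-/

open MeasureTheory
open scoped Matrix

section Median

variable {V : Type*} [Fintype V] {d φ : V → ℝ}

/-- `m` is a median of `g` with respect to the weights `d`: the vertices on either strict side of
`m` weigh at most as much as the remaining ones. -/
def IsWeightedMedian (d g : V → ℝ) (m : ℝ) : Prop :=
  ∑ u with m < g u, d u ≤ ∑ u with g u ≤ m, d u ∧ ∑ u with g u < m, d u ≤ ∑ u with m ≤ g u, d u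

theorem exists_isWeightedMedian [Nonempty V] (hd : ∀ u, 0 ≤ d u) (g : V → ℝ) :
    ∃ m, IsWeightedMedian d g m := by
  -- The least value of `g` satisfying the first inequality works: the preceding value fails it.
  set T := univ.filter fun a => ∑ u with g a < g u, d u ≤ ∑ u with g u ≤ g a, d u
  have hTne : T.Nonempty := by
    obtain ⟨a, ha⟩ := Finite.exists_max g
    refine ⟨a, mem_filter.2 ⟨mem_univ a, ?_⟩⟩
    rw [filter_false_of_mem fun u _ => (ha u).not_gt, sum_empty]
    exact sum_nonneg fun u _ => hd u
  obtain ⟨a, haT, hmin⟩ := T.exists_min_image g hTne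
  refine ⟨g a, (mem_filter.1 haT).2, ?_⟩
  rcases (univ.filter fun u => g u < g a).eq_empty_or_nonempty with hempty | hne
  · rw [hempty, sum_empty]
    exact sum_nonneg fun u _ => hd u
  obtain ⟨b, hb, hmax⟩ := exists_max_image _ g hne
  have hba : g b < g a := (mem_filter.1 hb).2
  have hle : ∀ u, g u ≤ g b ↔ g u < g a := fun u =>
    ⟨fun h => h.trans_lt hba, fun h => hmax u (mem_filter.2 ⟨mem_univ u, h⟩)⟩
  have hlt : ∀ u, g b < g u ↔ g a ≤ g u := fun u => by rw [← not_le, hle, not_lt]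
  have hbT : ¬ ∑ u with g b < g u, d u ≤ ∑ u with g u ≤ g b, d u := fun h =>
    (hmin b (mem_filter.2 ⟨mem_univ b, h⟩)).not_gt hba
  simp only [hle, hlt] at hbT
  exact (not_le.1 hbT).le

theorem IsWeightedMedian.min_sum_superlevel (hd : ∀ u, 0 ≤ d u) (hφ : IsWeightedMedian d φ 0)
    (t : ℝ) :
    min (∑ u with t ≤ φ u, d u) (∑ u ∈ (univ.filter fun u => t ≤ φ u)ᶜ, d u) =
      ∑ u, d u * (Set.uIoc 0 (φ u)).indicator 1 t := by
  have hmono {p q : V → Prop} (hpq : ∀ u, p u → q u) : ∑ u with p u, d u ≤ ∑ u with q u, d u :=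
    sum_le_sum_of_subset_of_nonneg (monotone_filter_right _ fun u _ => hpq u) fun u _ _ => hd u
  simp only [compl_filter, not_le]
  simp only [Set.indicator_apply, Pi.one_apply, mul_ite, mul_one, mul_zero, ← sum_filter,
    Set.mem_uIoc]
  rcases lt_or_ge 0 t with ht | ht
  · rw [min_eq_left <| (hmono fun u hu => ht.trans_le hu).trans <| hφ.1.trans <|
      hmono fun u hu => hu.trans_lt ht]
    simp only [ht, ht.not_ge, true_and, and_false, or_false]
  · rw [min_eq_right <| (hmono fun u hu => hu.trans_le ht).trans <| hφ.2.trans <|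
      hmono fun u hu => ht.trans hu]
    simp only [ht, ht.not_gt, false_and, and_true, false_or]

end Median

section Coarea

variable {α ι : Type*} [MeasurableSpace α] [Fintype ι] {μ : Measure α} {s : ι → Set α}

theorem integrable_const_mul_indicator_one {s : Set α} (hs : MeasurableSet s) (hμs : μ s ≠ ⊤)
    (c : ℝ) : Integrable (fun t => c * s.indicator 1 t) μ :=
  ((integrable_indicator_iff hs).2 (integrableOn_const hμs)).const_mul c

theorem integrable_sum_mul_indicator (hs : ∀ i, MeasurableSet (s i)) (hμs : ∀ i, μ (s i) ≠ ⊤)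
    (c : ι → ℝ) : Integrable (fun t => ∑ i, c i * (s i).indicator 1 t) μ :=
  integrable_finsetSum _ fun i _ => integrable_const_mul_indicator_one (hs i) (hμs i) (c i)

theorem integral_sum_mul_indicator (hs : ∀ i, MeasurableSet (s i)) (hμs : ∀ i, μ (s i) ≠ ⊤)
    (c : ι → ℝ) : ∫ t, ∑ i, c i * (s i).indicator 1 t ∂μ = ∑ i, c i * μ.real (s i) := by
  rw [integral_finsetSum _ fun i _ => integrable_const_mul_indicator_one (hs i) (hμs i) (c i)]
  simp only [integral_const_mul, integral_indicator_one (hs _)]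

variable {V : Type*} [Fintype V]

/-- The total weight of the edges leaving `S`, where `w u v` is the weight of the edge from `u`
to `v`. -/
def cutWeight (w : V → V → ℝ) (S : Finset V) : ℝ :=
  ∑ u ∈ S, ∑ v ∈ Sᶜ, w u v

theorem cutWeight_superlevel (w : V → V → ℝ) (φ : V → ℝ) (t : ℝ) :
    cutWeight w (univ.filter fun u => t ≤ φ u) =
      ∑ e : V × V, w e.1 e.2 * (Set.Ioc (φ e.2) (φ e.1)).indicator 1 t := by
  simp only [cutWeight, compl_filter, not_le, sum_filter, Fintype.sum_prod_type]
  refine sum_congr rfl fun u _ => ?_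
  by_cases hu : t ≤ φ u <;> simp [hu, Set.indicator_apply]

theorem mul_sum_abs_le_sum_mul_posPart_sub {w : V → V → ℝ} {d φ : V → ℝ} {h : ℝ}
    (hd : ∀ u, 0 ≤ d u)
    (hiso : ∀ S, h * min (∑ u ∈ S, d u) (∑ u ∈ Sᶜ, d u) ≤ cutWeight w S)
    (hφ : IsWeightedMedian d φ 0) :
    h * ∑ u, d u * |φ u| ≤ ∑ u, ∑ v, w u v * (φ u - φ v)⁺ := by
  have hvol_meas (u : V) : MeasurableSet (Set.uIoc 0 (φ u)) := measurableSet_uIoc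
  have hvol_fin (u : V) : volume (Set.uIoc 0 (φ u)) ≠ ⊤ := measure_Ioc_lt_top.ne
  have hcut_meas (e : V × V) : MeasurableSet (Set.Ioc (φ e.2) (φ e.1)) := measurableSet_Ioc
  have hcut_fin (e : V × V) : volume (Set.Ioc (φ e.2) (φ e.1)) ≠ ⊤ := measure_Ioc_lt_top.ne
  calc h * ∑ u, d u * |φ u| = ∫ t, h * ∑ u, d u * (Set.uIoc 0 (φ u)).indicator 1 t := by
        rw [integral_const_mul, integral_sum_mul_indicator hvol_meas hvol_fin]
        simp only [Measure.real, Real.volume_uIoc, sub_zero, ENNReal.toReal_ofReal (abs_nonneg _)]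
    _ ≤ ∫ t, ∑ e : V × V, w e.1 e.2 * (Set.Ioc (φ e.2) (φ e.1)).indicator 1 t := by
        refine integral_mono ((integrable_sum_mul_indicator hvol_meas hvol_fin d).const_mul h)
          (integrable_sum_mul_indicator hcut_meas hcut_fin _) fun t => ?_
        simp only [← hφ.min_sum_superlevel hd, ← cutWeight_superlevel]
        exact hiso _
    _ = ∑ u, ∑ v, w u v * (φ u - φ v)⁺ := by
        rw [integral_sum_mul_indicator hcut_meas hcut_fin, Fintype.sum_prod_type]
        simp only [Real.volume_real_Ioc, posPart_def]

end Coarea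

section SignedSq

/-- The odd function `x ↦ x |x|`. Composing with it turns squares into absolute values while
preserving signs, hence medians at `0`. -/
def signedSq (x : ℝ) : ℝ :=
  x * |x|

theorem signedSq_pos_iff {x : ℝ} : 0 < signedSq x ↔ 0 < x :=
  ⟨fun h => pos_of_mul_pos_left h (abs_nonneg x), fun h => mul_pos h (abs_pos.2 h.ne')⟩

theorem signedSq_neg_iff {x : ℝ} : signedSq x < 0 ↔ x < 0 :=
  ⟨fun h => neg_of_mul_neg_left h (abs_nonneg x),
    fun h => mul_neg_of_neg_of_pos h (abs_pos.2 h.ne)⟩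

theorem abs_signedSq (x : ℝ) : |signedSq x| = x ^ 2 := by
  rw [signedSq, abs_mul, abs_abs, abs_mul_abs_self, sq]

theorem abs_signedSq_sub_signedSq_le (x y : ℝ) :
    |signedSq x - signedSq y| ≤ |x - y| * (|x| + |y|) :=
  calc |signedSq x - signedSq y| = |(x - y) * |x| + y * (|x| - |y|)| := by
        simp only [signedSq]
        ring_nf
    _ ≤ |x - y| * |x| + |y| * |(|x| - |y|)| := by
        simpa only [abs_mul, abs_abs] using abs_add_le ((x - y) * |x|) (y * (|x| - |y|))
    _ ≤ |x - y| * |x| + |y| * |x - y| := by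
        gcongr _ + _ * ?_
        exact abs_abs_sub_abs_le x y
    _ = |x - y| * (|x| + |y|) := by ring

end SignedSq

section Cheeger

variable {V : Type*} [Fintype V] {w : V → V → ℝ}

/-- The degree of a vertex in the weighted graph with edge weights `w`; a loop counts once. -/
def weightedDegree (w : V → V → ℝ) (u : V) : ℝ :=
  ∑ v, w u v

theorem weightedDegree_nonneg (hw : ∀ u v, 0 ≤ w u v) (u : V) : 0 ≤ weightedDegree w u :=
  sum_nonneg fun v _ => hw u v

theorem sum_sum_mul_left (w : V → V → ℝ) (f : V → ℝ) :
    ∑ u, ∑ v, w u v * f u = ∑ u, weightedDegree w u * f u := by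
  simp only [weightedDegree, sum_mul]

theorem sum_sum_mul_right (hsymm : ∀ u v, w u v = w v u) (f : V → ℝ) :
    ∑ u, ∑ v, w u v * f v = ∑ u, weightedDegree w u * f u := by
  rw [sum_comm, ← sum_sum_mul_left]
  simp only [hsymm]

theorem two_mul_sum_mul_posPart_sub (hsymm : ∀ u v, w u v = w v u) (φ : V → ℝ) :
    2 * ∑ u, ∑ v, w u v * (φ u - φ v)⁺ = ∑ u, ∑ v, w u v * |φ u - φ v| := by
  have hswap : ∑ u, ∑ v, w u v * (φ u - φ v)⁺ = ∑ u, ∑ v, w u v * (φ u - φ v)⁻ := by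
    rw [sum_comm]
    simp only [← posPart_neg, neg_sub, hsymm]
  simp only [← posPart_add_negPart, mul_add, sum_add_distrib, ← hswap, two_mul]

theorem sum_sum_mul_add_sq_le (hw : ∀ u v, 0 ≤ w u v) (hsymm : ∀ u v, w u v = w v u)
    (x : V → ℝ) :
    ∑ u, ∑ v, w u v * (x u + x v) ^ 2 ≤ 4 * ∑ u, weightedDegree w u * x u ^ 2 :=
  calc ∑ u, ∑ v, w u v * (x u + x v) ^ 2
      ≤ ∑ u, ∑ v, w u v * (2 * (x u ^ 2 + x v ^ 2)) := by
        gcongr with u _ v _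
        · exact hw u v
        · exact add_sq_le
    _ = 2 * (∑ u, ∑ v, w u v * x u ^ 2 + ∑ u, ∑ v, w u v * x v ^ 2) := by
        simp only [← sum_add_distrib, mul_sum]
        exact sum_congr rfl fun u _ => sum_congr rfl fun v _ => by ring
    _ = 4 * ∑ u, weightedDegree w u * x u ^ 2 := by
        rw [sum_sum_mul_left w (x · ^ 2), sum_sum_mul_right hsymm (x · ^ 2)]
        ring

theorem sum_sum_mul_sub_sq_nonneg (hw : ∀ u v, 0 ≤ w u v) (x : V → ℝ) :
    0 ≤ ∑ u, ∑ v, w u v * (x u - x v) ^ 2 :=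
  sum_nonneg fun u _ => sum_nonneg fun v _ => mul_nonneg (hw u v) (sq_nonneg _)

theorem sq_sum_mul_abs_signedSq_sub_le (hw : ∀ u v, 0 ≤ w u v) (hsymm : ∀ u v, w u v = w v u)
    (x : V → ℝ) :
    (∑ u, ∑ v, w u v * |signedSq (x u) - signedSq (x v)|) ^ 2 ≤
      (∑ u, ∑ v, w u v * (x u - x v) ^ 2) * (4 * ∑ u, weightedDegree w u * x u ^ 2) :=
  calc (∑ u, ∑ v, w u v * |signedSq (x u) - signedSq (x v)|) ^ 2
      ≤ (∑ u, ∑ v, w u v * (x u - x v) ^ 2) * ∑ u, ∑ v, w u v * (|x u| + |x v|) ^ 2 := by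
        simp only [← Fintype.sum_prod_type']
        refine sum_sq_le_sum_mul_sum_of_sq_le_mul _ (fun e _ => mul_nonneg (hw _ _) (sq_nonneg _))
          (fun e _ => mul_nonneg (hw _ _) (sq_nonneg _)) fun e _ => ?_
        calc (w e.1 e.2 * |signedSq (x e.1) - signedSq (x e.2)|) ^ 2
            ≤ (w e.1 e.2 * (|x e.1 - x e.2| * (|x e.1| + |x e.2|))) ^ 2 := by
              gcongr
              · exact mul_nonneg (hw _ _) (abs_nonneg _)
              · exact hw _ _
              · exact abs_signedSq_sub_signedSq_le _ _
          _ = w e.1 e.2 * (x e.1 - x e.2) ^ 2 * (w e.1 e.2 * (|x e.1| + |x e.2|) ^ 2) := by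
              rw [mul_pow, mul_pow, sq_abs]
              ring
    _ ≤ (∑ u, ∑ v, w u v * (x u - x v) ^ 2) * (4 * ∑ u, weightedDegree w u * x u ^ 2) := by
        gcongr
        · exact sum_sum_mul_sub_sq_nonneg hw x
        · simpa only [sq_abs] using sum_sum_mul_add_sq_le hw hsymm fun u => |x u|

theorem IsWeightedMedian.signedSq_sub {d g : V → ℝ} {m : ℝ} (hm : IsWeightedMedian d g m) :
    IsWeightedMedian d (fun u => signedSq (g u - m)) 0 := by
  simpa only [IsWeightedMedian, ← not_lt, signedSq_pos_iff, signedSq_neg_iff, sub_pos, sub_neg]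
    using hm

theorem sq_mul_sum_sq_sub_median_le (hw : ∀ u v, 0 ≤ w u v) (hsymm : ∀ u v, w u v = w v u)
    {h : ℝ} (hh : 0 ≤ h)
    (hiso : ∀ S, h * min (∑ u ∈ S, weightedDegree w u) (∑ u ∈ Sᶜ, weightedDegree w u) ≤
      cutWeight w S)
    {g : V → ℝ} {m : ℝ} (hm : IsWeightedMedian (weightedDegree w) g m) :
    h ^ 2 * ∑ u, weightedDegree w u * (g u - m) ^ 2 ≤ ∑ u, ∑ v, w u v * (g u - g v) ^ 2 := by
  set N := ∑ u, weightedDegree w u * (g u - m) ^ 2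
  have hN : 0 ≤ N := sum_nonneg fun u _ => mul_nonneg (weightedDegree_nonneg hw u) (sq_nonneg _)
  have hcoarea : h * N ≤
      ∑ u, ∑ v, w u v * (signedSq (g u - m) - signedSq (g v - m))⁺ := by
    simpa only [abs_signedSq] using
      mul_sum_abs_le_sum_mul_posPart_sub (weightedDegree_nonneg hw) hiso hm.signedSq_sub
  have hcs := sq_sum_mul_abs_signedSq_sub_le hw hsymm fun u => g u - m
  simp only [sub_sub_sub_cancel_right] at hcs
  rw [← two_mul_sum_mul_posPart_sub hsymm fun u => signedSq (g u - m)] at hcs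
  rcases hN.eq_or_lt with hzero | hpos
  · rw [← hzero, mul_zero]
    exact sum_sum_mul_sub_sq_nonneg hw g
  · refine le_of_mul_le_mul_right ?_ hpos
    linarith [pow_le_pow_left₀ (mul_nonneg hh hN) hcoarea 2]

/-- The Cheeger constant of the weighted graph with edge weights `w`. A set `S` such that `S` or
`Sᶜ` has total degree `0` contributes the junk value `0`. -/
def weightedCheeger (w : V → V → ℝ) : ℝ :=
  sInf {x : ℝ | ∃ S : Finset V, S.Nonempty ∧ S ≠ univ ∧
    x = cutWeight w S / min (∑ u ∈ S, weightedDegree w u) (∑ u ∈ Sᶜ, weightedDegree w u)}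

theorem cutWeight_nonneg (hw : ∀ u v, 0 ≤ w u v) (S : Finset V) : 0 ≤ cutWeight w S :=
  sum_nonneg fun u _ => sum_nonneg fun v _ => hw u v

theorem min_sum_weightedDegree_nonneg (hw : ∀ u v, 0 ≤ w u v) (S : Finset V) :
    0 ≤ min (∑ u ∈ S, weightedDegree w u) (∑ u ∈ Sᶜ, weightedDegree w u) :=
  le_min (sum_nonneg fun u _ => weightedDegree_nonneg hw u)
    (sum_nonneg fun u _ => weightedDegree_nonneg hw u)

theorem weightedCheeger_nonneg (hw : ∀ u v, 0 ≤ w u v) : 0 ≤ weightedCheeger w := by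
  refine Real.sInf_nonneg ?_
  rintro _ ⟨S, -, -, rfl⟩
  exact div_nonneg (cutWeight_nonneg hw S) (min_sum_weightedDegree_nonneg hw S)

theorem weightedCheeger_mul_min_le_cutWeight (hw : ∀ u v, 0 ≤ w u v) (S : Finset V) :
    weightedCheeger w * min (∑ u ∈ S, weightedDegree w u) (∑ u ∈ Sᶜ, weightedDegree w u) ≤
      cutWeight w S := by
  rcases (min_sum_weightedDegree_nonneg hw S).eq_or_lt with hzero | hpos
  · rw [← hzero, mul_zero]
    exact cutWeight_nonneg hw S
  have hS : S.Nonempty := by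
    rw [nonempty_iff_ne_empty]
    rintro rfl
    simp at hpos
  have hSc : S ≠ univ := by
    rintro rfl
    simp at hpos
  rw [← le_div_iff₀ hpos]
  refine csInf_le ⟨0, ?_⟩ ⟨S, hS, hSc, rfl⟩
  rintro _ ⟨T, -, -, rfl⟩
  exact div_nonneg (cutWeight_nonneg hw T) (min_sum_weightedDegree_nonneg hw T)

end Cheeger

section Averaging

theorem integral_abs_mul_cos_add_mul_sin (a b : ℝ) :
    ∫ θ in 0..Real.pi, |Real.cos θ * a + Real.sin θ * b| = 2 * √(a ^ 2 + b ^ 2) := by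
  have hperiodic : Function.Periodic (fun θ => |Real.cos θ|) Real.pi := fun θ => by
    simp only [Real.cos_add_pi, abs_neg]
  have hcos : ∫ θ in -(Real.pi / 2)..Real.pi / 2, |Real.cos θ| = 2 := by
    rw [intervalIntegral.integral_congr (g := Real.cos), integral_cos]
    · norm_num
    · intro θ hθ
      rw [Set.uIcc_of_le (by linarith [Real.pi_pos])] at hθ
      exact abs_of_nonneg (Real.cos_nonneg_of_mem_Icc hθ)
  set z : ℂ := ⟨a, b⟩
  have hnorm : ‖z‖ = √(a ^ 2 + b ^ 2) := Complex.norm_def z ▸ by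
    rw [Complex.normSq_mk, sq, sq]
  have hpolar (θ : ℝ) :
      |Real.cos θ * a + Real.sin θ * b| = ‖z‖ * |Real.cos (θ - z.arg)| := by
    rw [show a = ‖z‖ * Real.cos z.arg from (Complex.norm_mul_cos_arg z).symm,
      show b = ‖z‖ * Real.sin z.arg from (Complex.norm_mul_sin_arg z).symm,
      ← abs_of_nonneg (norm_nonneg z), ← abs_mul, Real.cos_sub, abs_norm]
    ring_nf
  calc ∫ θ in 0..Real.pi, |Real.cos θ * a + Real.sin θ * b|
      = ‖z‖ * ∫ θ in -z.arg..-z.arg + Real.pi, |Real.cos θ| := by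
        simp only [hpolar, intervalIntegral.integral_const_mul]
        rw [intervalIntegral.integral_comp_sub_right (fun θ => |Real.cos θ|), zero_sub,
          sub_eq_neg_add]
    _ = ‖z‖ * ∫ θ in -(Real.pi / 2)..-(Real.pi / 2) + Real.pi, |Real.cos θ| := by
        rw [hperiodic.intervalIntegral_add_eq]
    _ = 2 * √(a ^ 2 + b ^ 2) := by
        rw [show -(Real.pi / 2) + Real.pi = Real.pi / 2 by ring, hcos, hnorm, mul_comm]

variable {V : Type*} [Fintype V]

theorem exists_angle_sq_sum_mul_abs_le {d : V → ℝ} (hd : ∀ u, 0 ≤ d u)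
    (f g : V → ℝ) :
    ∃ θ : ℝ, (∑ u, d u * |Real.cos θ * f u + Real.sin θ * g u|) ^ 2 ≤
      4 / Real.pi ^ 2 * ((∑ u, d u) * ∑ u, d u * (f u ^ 2 + g u ^ 2)) := by
  set F : ℝ → ℝ := fun θ => ∑ u, d u * |Real.cos θ * f u + Real.sin θ * g u|
  have hcont (u : V) : Continuous fun θ => d u * |Real.cos θ * f u + Real.sin θ * g u| := by
    fun_prop
  have hF : Continuous F := continuous_finsetSum _ fun u _ => hcont u
  have hmean : ∫ θ in 0..Real.pi, F θ = 2 * ∑ u, d u * √(f u ^ 2 + g u ^ 2) := by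
    rw [intervalIntegral.integral_finsetSum fun u _ => (hcont u).intervalIntegrable _ _]
    simp only [intervalIntegral.integral_const_mul, integral_abs_mul_cos_add_mul_sin, mul_sum]
    exact sum_congr rfl fun u _ => mul_left_comm _ _ _
  obtain ⟨θ, -, hθ⟩ : ∃ θ ∈ Set.Ioc 0 Real.pi, F θ ≤ ⨍ t in Set.Ioc 0 Real.pi, F t :=
    exists_le_setAverage (by simp [Real.pi_pos]) measure_Ioc_lt_top.ne
      (hF.integrableOn_Icc.mono_set Set.Ioc_subset_Icc_self)
  rw [← Set.uIoc_of_le Real.pi_pos.le, interval_average_eq, hmean, sub_zero, smul_eq_mul] at hθ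
  have hnonneg : 0 ≤ F θ := sum_nonneg fun u _ => mul_nonneg (hd u) (abs_nonneg _)
  have hcs : (∑ u, d u * √(f u ^ 2 + g u ^ 2)) ^ 2 ≤
      (∑ u, d u) * ∑ u, d u * (f u ^ 2 + g u ^ 2) :=
    sum_sq_le_sum_mul_sum_of_sq_le_mul _ (fun u _ => hd u)
      (fun u _ => mul_nonneg (hd u) (by positivity)) fun u _ => by
        rw [mul_pow, Real.sq_sqrt (by positivity), sq, mul_assoc]
  refine ⟨θ, ?_⟩
  calc F θ ^ 2 ≤ (Real.pi⁻¹ * (2 * ∑ u, d u * √(f u ^ 2 + g u ^ 2))) ^ 2 :=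
        pow_le_pow_left₀ hnonneg hθ 2
    _ = 4 / Real.pi ^ 2 * (∑ u, d u * √(f u ^ 2 + g u ^ 2)) ^ 2 := by ring
    _ ≤ _ := by gcongr

theorem sum_mul_sum_sq_sub_sq_sum_le (d x : V → ℝ) (m : ℝ) :
    (∑ u, d u) * ∑ u, d u * x u ^ 2 - (∑ u, d u * x u) ^ 2 ≤
      (∑ u, d u) * ∑ u, d u * (x u - m) ^ 2 := by
  have hexpand : ∑ u, d u * (x u - m) ^ 2 =
      ∑ u, d u * x u ^ 2 - 2 * m * ∑ u, d u * x u + m ^ 2 * ∑ u, d u := by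
    simp only [mul_sum, ← sum_add_distrib, ← sum_sub_distrib]
    exact sum_congr rfl fun u _ => by ring
  rw [hexpand]
  linarith [sq_nonneg (m * ∑ u, d u - ∑ u, d u * x u)]

theorem sum_mul_combination_mul_combination {d f g : V → ℝ} (hff : ∑ u, d u * (f u * f u) = 1)
    (hgg : ∑ u, d u * (g u * g u) = 1) (hfg : ∑ u, d u * (f u * g u) = 0) (a b a' b' : ℝ) :
    ∑ u, d u * ((a * f u + b * g u) * (a' * f u + b' * g u)) = a * a' + b * b' :=
  calc ∑ u, d u * ((a * f u + b * g u) * (a' * f u + b' * g u))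
      = a * a' * ∑ u, d u * (f u * f u) + b * b' * ∑ u, d u * (g u * g u) +
          (a * b' + b * a') * ∑ u, d u * (f u * g u) := by
        simp only [mul_sum, ← sum_add_distrib]
        exact sum_congr rfl fun u _ => by ring
    _ = a * a' + b * b' := by
        rw [hff, hgg, hfg]
        ring

theorem exists_angle_forall_le_sum_mul_sq_abs_sub [Nonempty V] {d f g : V → ℝ}
    (hd : ∀ u, 0 < d u) (hff : ∑ u, d u * (f u * f u) = 1) (hgg : ∑ u, d u * (g u * g u) = 1)
    (hfg : ∑ u, d u * (f u * g u) = 0) :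
    ∃ θ : ℝ, ∀ m, 1 - 8 / Real.pi ^ 2 ≤
      ∑ u, d u * (|Real.cos θ * f u + Real.sin θ * g u| - m) ^ 2 := by
  obtain ⟨θ, hθ⟩ := exists_angle_sq_sum_mul_abs_le (fun u => (hd u).le) f g
  refine ⟨θ, fun m => ?_⟩
  have hW : 0 < ∑ u, d u := sum_pos (fun u _ => hd u) univ_nonempty
  have htrace : ∑ u, d u * (f u ^ 2 + g u ^ 2) = 2 := by
    simp only [sq, mul_add, sum_add_distrib, hff, hgg]
    norm_num
  have hunit : ∑ u, d u * (Real.cos θ * f u + Real.sin θ * g u) ^ 2 = 1 := by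
    simp only [sq, sum_mul_combination_mul_combination hff hgg hfg]
    simpa only [sq] using Real.cos_sq_add_sin_sq θ
  have hvariance :=
    sum_mul_sum_sq_sub_sq_sum_le d (fun u => |Real.cos θ * f u + Real.sin θ * g u|) m
  simp only [sq_abs, hunit] at hvariance
  rw [htrace] at hθ
  refine le_of_mul_le_mul_left ?_ hW
  calc (∑ u, d u) * (1 - 8 / Real.pi ^ 2)
      = (∑ u, d u) * 1 - 4 / Real.pi ^ 2 * ((∑ u, d u) * 2) := by ring
    _ ≤ _ := (sub_le_sub_left hθ _).trans hvariance

end Averaging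

section Spectral

variable {V : Type*} [Fintype V]

theorem eigenvalues₀_eq_of_charpoly_eq_prod {A : Matrix V V ℝ} (hA : A.IsHermitian)
    {μs : Fin (Fintype.card V) → ℝ} (hanti : Antitone μs)
    (hchar : A.charpoly = ∏ i, (X - C (μs i))) : hA.eigenvalues₀ = μs := by
  have hroots : (∏ i, (X - C (μs i))).roots = (List.ofFn μs : Multiset ℝ) := by
    rw [roots_prod _ _ (prod_ne_zero_iff.2 fun i _ => X_sub_C_ne_zero _)]
    simp [Fin.univ_val_map]
  have hperm : (List.ofFn hA.eigenvalues₀ : Multiset ℝ) = List.ofFn μs := by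
    rw [← hroots, ← hchar, hA.roots_charpoly_eq_eigenvalues₀, Fin.univ_val_map]
    rfl
  exact List.ofFn_inj.1 <| (Multiset.coe_eq_coe.1 hperm).eq_of_sortedGE
    hA.eigenvalues₀_antitone.sortedGE_ofFn hanti.sortedGE_ofFn

theorem exists_orthonormal_eigenvectors {A : Matrix V V ℝ} (hA : A.IsHermitian)
    {μs : Fin (Fintype.card V) → ℝ} (hanti : Antitone μs)
    (hchar : A.charpoly = ∏ i, (X - C (μs i))) :
    ∃ φ : Fin (Fintype.card V) → V → ℝ,
      (∀ i j, φ i ⬝ᵥ φ j = if i = j then 1 else 0) ∧ ∀ i, A *ᵥ φ i = μs i • φ i := by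
  let e : Fin (Fintype.card V) ≃ V := Fintype.equivOfCardEq (Fintype.card_fin _)
  have heigenvalue (i) : hA.eigenvalues (e i) = μs i := by
    rw [← eigenvalues₀_eq_of_charpoly_eq_prod hA hanti hchar]
    exact congrArg hA.eigenvalues₀ (e.symm_apply_apply i)
  refine ⟨fun i => hA.eigenvectorBasis (e i), fun i j => ?_, fun i => ?_⟩
  · rw [dotProduct_comm]
    simpa only [EuclideanSpace.inner_eq_star_dotProduct, star_trivial, e.injective.eq_iff] using
      orthonormal_iff_ite.1 hA.eigenvectorBasis.orthonormal (e i) (e j)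
  · rw [hA.mulVec_eigenvectorBasis, heigenvalue]

theorem exists_weighted_orthonormal_eigenvectors {A : Matrix V V ℝ} {d : V → ℝ}
    (hd : ∀ u, 0 < d u) (hrev : ∀ u v, d u * A u v = d v * A v u)
    {μs : Fin (Fintype.card V) → ℝ} (hanti : Antitone μs)
    (hchar : A.charpoly = ∏ i, (X - C (μs i))) :
    ∃ φ : Fin (Fintype.card V) → V → ℝ,
      (∀ i j, ∑ u, d u * (φ i u * φ j u) = if i = j then 1 else 0) ∧
        ∀ i, A *ᵥ φ i = μs i • φ i := by
  have hsqrt_ne (u : V) : √(d u) ≠ 0 := (Real.sqrt_pos.2 (hd u)).ne'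
  have hsq (u : V) : √(d u) * √(d u) = d u := Real.mul_self_sqrt (hd u).le
  set D : Matrix V V ℝ := Matrix.diagonal fun u => √(d u)
  set D' : Matrix V V ℝ := Matrix.diagonal fun u => (√(d u))⁻¹
  have hinv : D' * D = 1 := by
    rw [Matrix.diagonal_mul_diagonal, ← Matrix.diagonal_one]
    exact congrArg _ (funext fun u => inv_mul_cancel₀ (hsqrt_ne u))
  have hM : (D * A * D').IsHermitian := Matrix.IsHermitian.ext fun u v => by
    have huv := hrev u v
    rw [← hsq u, ← hsq v] at huv
    simp only [D, D', Matrix.mul_diagonal, Matrix.diagonal_mul, star_trivial]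
    field_simp [hsqrt_ne u, hsqrt_ne v]
    linarith
  have hcharM : (D * A * D').charpoly = ∏ i, (X - C (μs i)) := by
    rw [Matrix.charpoly_mul_comm, ← Matrix.mul_assoc, hinv, Matrix.one_mul, hchar]
  obtain ⟨x, horth, heigen⟩ := exists_orthonormal_eigenvectors hM hanti hcharM
  refine ⟨fun i => D' *ᵥ x i, fun i j => ?_, fun i => ?_⟩
  · rw [← horth i j]
    refine sum_congr rfl fun u _ => ?_
    simp only [D', Matrix.mulVec_diagonal]
    calc d u * ((√(d u))⁻¹ * x i u * ((√(d u))⁻¹ * x j u))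
        = (d u * ((√(d u))⁻¹ * (√(d u))⁻¹)) * (x i u * x j u) := by ring
      _ = x i u * x j u := by
          rw [← mul_inv, hsq, mul_inv_cancel₀ (hd u).ne', one_mul]
  · calc A *ᵥ D' *ᵥ x i = D' *ᵥ (D * A * D') *ᵥ x i := by
          simp only [Matrix.mulVec_mulVec, ← Matrix.mul_assoc, hinv, Matrix.one_mul]
      _ = μs i • D' *ᵥ x i := by rw [heigen, Matrix.mulVec_smul]

end Spectral

section Walk

variable {V : Type*} [Fintype V] {w : V → V → ℝ}

/-- The transition matrix of the random walk on the weighted graph with edge weights `w`, i.e. its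
normalized adjacency matrix; the row of a vertex of weighted degree `0` vanishes. -/
def walkMatrix (w : V → V → ℝ) : Matrix V V ℝ :=
  Matrix.of fun u v => (weightedDegree w u)⁻¹ * w u v

theorem weightedDegree_mul_walkMatrix (hdeg : ∀ u, 0 < weightedDegree w u) (u v : V) :
    weightedDegree w u * walkMatrix w u v = w u v :=
  mul_inv_cancel_left₀ (hdeg u).ne' _

theorem sum_sum_mul_add_sq (hsymm : ∀ u v, w u v = w v u) (hdeg : ∀ u, 0 < weightedDegree w u)
    (k : V → ℝ) :
    ∑ u, ∑ v, w u v * (k u + k v) ^ 2 =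
      2 * (∑ u, weightedDegree w u * (k u * k u) +
        ∑ u, weightedDegree w u * (k u * (walkMatrix w *ᵥ k) u)) := by
  have hcross : ∑ u, weightedDegree w u * (k u * (walkMatrix w *ᵥ k) u) =
      ∑ u, ∑ v, w u v * (k u * k v) := by
    refine sum_congr rfl fun u _ => ?_
    rw [Matrix.mulVec, dotProduct, mul_sum, mul_sum]
    refine sum_congr rfl fun v _ => ?_
    rw [← weightedDegree_mul_walkMatrix hdeg u v]
    ring
  rw [hcross, two_mul, add_add_add_comm]
  nth_rw 1 [← sum_sum_mul_left w fun u => k u * k u]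
  rw [← sum_sum_mul_right hsymm fun u => k u * k u]
  simp only [← sum_add_distrib]
  exact sum_congr rfl fun u _ => sum_congr rfl fun v _ => by ring

theorem sum_sum_mul_combination_add_sq_le (hsymm : ∀ u v, w u v = w v u)
    (hdeg : ∀ u, 0 < weightedDegree w u) {f g : V → ℝ} {μ ν : ℝ}
    (hff : ∑ u, weightedDegree w u * (f u * f u) = 1)
    (hgg : ∑ u, weightedDegree w u * (g u * g u) = 1)
    (hfg : ∑ u, weightedDegree w u * (f u * g u) = 0)
    (hf : walkMatrix w *ᵥ f = μ • f) (hg : walkMatrix w *ᵥ g = ν • g) (hνμ : ν ≤ μ)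
    {a b : ℝ} (hab : a ^ 2 + b ^ 2 = 1) :
    ∑ u, ∑ v, w u v * ((a * f u + b * g u) + (a * f v + b * g v)) ^ 2 ≤ 2 * (1 + μ) := by
  have himage (u : V) : (walkMatrix w *ᵥ fun u => a * f u + b * g u) u =
      a * μ * f u + b * ν * g u := by
    rw [show (fun u => a * f u + b * g u) = a • f + b • g from rfl, Matrix.mulVec_add,
      Matrix.mulVec_smul, Matrix.mulVec_smul, hf, hg]
    simp only [Pi.add_apply, Pi.smul_apply, smul_eq_mul, mul_assoc]
  rw [sum_sum_mul_add_sq hsymm hdeg fun u => a * f u + b * g u]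
  simp only [himage, sum_mul_combination_mul_combination hff hgg hfg]
  linarith [mul_le_mul_of_nonneg_left hνμ (sq_nonneg b), congrArg (· * μ) hab]

theorem sum_sum_mul_abs_sub_abs_sq_le (hw : ∀ u v, 0 ≤ w u v) (k : V → ℝ) :
    ∑ u, ∑ v, w u v * (|k u| - |k v|) ^ 2 ≤ ∑ u, ∑ v, w u v * (k u + k v) ^ 2 := by
  refine sum_le_sum fun u _ => sum_le_sum fun v _ => mul_le_mul_of_nonneg_left ?_ (hw u v)
  rw [sq_le_sq]
  simpa only [abs_neg, sub_neg_eq_add] using abs_abs_sub_abs_le (k u) (-k v)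

theorem sq_weightedCheeger_le_of_orthonormal_eigenvectors [Nonempty V] (hw : ∀ u v, 0 ≤ w u v)
    (hsymm : ∀ u v, w u v = w v u) (hdeg : ∀ u, 0 < weightedDegree w u) {f g : V → ℝ} {μ ν : ℝ}
    (hff : ∑ u, weightedDegree w u * (f u * f u) = 1)
    (hgg : ∑ u, weightedDegree w u * (g u * g u) = 1)
    (hfg : ∑ u, weightedDegree w u * (f u * g u) = 0)
    (hf : walkMatrix w *ᵥ f = μ • f) (hg : walkMatrix w *ᵥ g = ν • g) (hνμ : ν ≤ μ) :
    (1 / 2 - 4 / Real.pi ^ 2) * weightedCheeger w ^ 2 ≤ 1 + μ := by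
  obtain ⟨θ, hθ⟩ := exists_angle_forall_le_sum_mul_sq_abs_sub hdeg hff hgg hfg
  set k : V → ℝ := fun u => Real.cos θ * f u + Real.sin θ * g u
  obtain ⟨m, hm⟩ := exists_isWeightedMedian (weightedDegree_nonneg hw) fun u => |k u|
  have hchain : weightedCheeger w ^ 2 * (1 - 8 / Real.pi ^ 2) ≤ 2 * (1 + μ) :=
    calc weightedCheeger w ^ 2 * (1 - 8 / Real.pi ^ 2)
        ≤ weightedCheeger w ^ 2 * ∑ u, weightedDegree w u * (|k u| - m) ^ 2 :=
          mul_le_mul_of_nonneg_left (hθ m) (sq_nonneg _)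
      _ ≤ ∑ u, ∑ v, w u v * (|k u| - |k v|) ^ 2 :=
          sq_mul_sum_sq_sub_median_le hw hsymm (weightedCheeger_nonneg hw)
            (weightedCheeger_mul_min_le_cutWeight hw) hm
      _ ≤ ∑ u, ∑ v, w u v * (k u + k v) ^ 2 := sum_sum_mul_abs_sub_abs_sq_le hw k
      _ ≤ 2 * (1 + μ) :=
          sum_sum_mul_combination_add_sq_le hsymm hdeg hff hgg hfg hf hg hνμ
            (Real.cos_sq_add_sin_sq θ)
  calc (1 / 2 - 4 / Real.pi ^ 2) * weightedCheeger w ^ 2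
      = weightedCheeger w ^ 2 * (1 - 8 / Real.pi ^ 2) / 2 := by ring
    _ ≤ 1 + μ := by linarith

theorem one_add_secondSmallest_ge_of_cheeger_general (hw : ∀ u v, 0 ≤ w u v)
    (hsymm : ∀ u v, w u v = w v u) (hdeg : ∀ u, 0 < weightedDegree w u)
    (hn : 2 ≤ Fintype.card V) (μs : Fin (Fintype.card V) → ℝ) (hanti : Antitone μs)
    (hchar : (walkMatrix w).charpoly = ∏ i, (X - C (μs i))) :
    1 + μs ⟨Fintype.card V - 2, Nat.sub_lt (two_pos.trans_le hn) two_pos⟩ ≥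
      (1 / 2 - 4 / Real.pi ^ 2) * weightedCheeger w ^ 2 := by
  have : Nonempty V := Fintype.card_pos_iff.1 (two_pos.trans_le hn)
  have hrev (u v : V) :
      weightedDegree w u * walkMatrix w u v = weightedDegree w v * walkMatrix w v u := by
    rw [weightedDegree_mul_walkMatrix hdeg, weightedDegree_mul_walkMatrix hdeg, hsymm]
  obtain ⟨φ, horth, heigen⟩ := exists_weighted_orthonormal_eigenvectors hdeg hrev hanti hchar
  let i : Fin (Fintype.card V) := ⟨Fintype.card V - 2, Nat.sub_lt (two_pos.trans_le hn) two_pos⟩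
  let j : Fin (Fintype.card V) := ⟨Fintype.card V - 1, Nat.sub_lt (two_pos.trans_le hn) one_pos⟩
  have hij : i < j := Fin.mk_lt_mk.2 (by omega)
  exact sq_weightedCheeger_le_of_orthonormal_eigenvectors hw hsymm hdeg
    ((horth i i).trans (if_pos rfl)) ((horth j j).trans (if_pos rfl))
    ((horth i j).trans (if_neg hij.ne)) (heigen i) (heigen j) (hanti hij.le)

end Walk

section Graph

variable {V : Type*} (G : SimpleGraph V)

/-- The edge weights of a simple graph regarded as a weighted graph: the entries of its adjacency
matrix, as a plain function. -/
def adjWeight (u v : V) : ℝ :=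
  if G.Adj u v then 1 else 0

theorem adjWeight_nonneg (u v : V) : 0 ≤ adjWeight G u v :=
  ite_nonneg zero_le_one le_rfl

theorem adjWeight_symm (u v : V) : adjWeight G u v = adjWeight G v u := by
  simp only [adjWeight, G.adj_comm]

variable [Fintype V]

theorem weightedDegree_adjWeight (u : V) : weightedDegree (adjWeight G) u = G.degree u := by
  simp only [weightedDegree, adjWeight, sum_boole, ← G.card_neighborFinset_eq_degree,
    G.neighborFinset_eq_filter]

theorem walkMatrix_adjWeight : walkMatrix (adjWeight G) = normAdj G := by
  ext u v
  simp only [walkMatrix, normAdj, Matrix.of_apply, weightedDegree_adjWeight, adjWeight, mul_ite,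
    mul_one, mul_zero]

theorem weightedCheeger_adjWeight : weightedCheeger (adjWeight G) = cheeger G := by
  simp only [weightedCheeger, cheeger, vol, weightedDegree_adjWeight]
  rfl

end Graph

theorem sq_sqrt_three_sub_one_div_eight_le : (√3 - 1) ^ 2 / 8 ≤ 1 / 2 - 4 / Real.pi ^ 2 := by
  have hsqrt : (1.73 : ℝ) ≤ √3 := Real.le_sqrt_of_sq_le (by norm_num)
  have hpi : 4 / Real.pi ^ 2 ≤ 4 / 3.14 ^ 2 := by
    gcongr
    exact Real.pi_gt_d2.le
  linarith [Real.sq_sqrt (show (0 : ℝ) ≤ 3 by norm_num)]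

/-- **Corollary 2, second inequality**: for a finite connected graph with normalized
adjacency eigenvalues `μs (n-1) = μₙ ≤ ⋯ ≤ μs 1 = μ₂ ≤ μs 0 = μ₁ = 1` (listed with
multiplicity, in decreasing order, as the roots of the characteristic polynomial of
`D⁻¹A`) and edge-expansion `h`, one has `1 + μ_{n-1} ≥ ((√3 - 1)²/8)·h²`. -/
theorem one_add_secondSmallest_ge_of_cheeger {V : Type*} [Fintype V] (G : SimpleGraph V)
    (hconn : G.Connected) (hn : 2 ≤ Fintype.card V)
    (μs : Fin (Fintype.card V) → ℝ) (hanti : Antitone μs)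
    (hchar : (normAdj G).charpoly = ∏ i, (X - C (μs i)))
    (hμ1 : μs ⟨0, by omega⟩ = 1) :
    1 + μs ⟨Fintype.card V - 2, by omega⟩ ≥
      (Real.sqrt 3 - 1) ^ 2 / 8 * cheeger G ^ 2 := by
  have : Nontrivial V := Fintype.one_lt_card_iff_nontrivial.1 hn
  have hdeg (u : V) : 0 < weightedDegree (adjWeight G) u := by
    rw [weightedDegree_adjWeight]
    exact_mod_cast hconn.preconnected.degree_pos_of_nontrivial u
  have hgeneral := one_add_secondSmallest_ge_of_cheeger_general (adjWeight_nonneg G)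
    (adjWeight_symm G) hdeg hn μs hanti (by rw [walkMatrix_adjWeight, hchar])
  rw [weightedCheeger_adjWeight] at hgeneral
  exact (mul_le_mul_of_nonneg_right sq_sqrt_three_sub_one_div_eight_le (sq_nonneg _)).trans
    hgeneral

end
end
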